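/- arXiv:1301.3244 — 2 statements merged into one kernel-verified Lean document; each statement's English description precedes it below -/
import Mathlib

section
/- Averaging commutes with Poisson bracket against invariants: let H : ℝⁿ×ℝⁿ → ℝ be smooth with complete canonical Hamiltonian vector field X_H whose flow is periodic with smooth frequency function ω > 0, and let ψ be the 2π-periodic flow of the generator Υ = (1/ω) X_H. If f, g : ℝⁿ×ℝⁿ → ℝ are smooth and g is S¹-invariant (g ∘ ψ_t = g for all t), then ⟨{f, g}⟩ = {⟨f⟩, g}, where ⟨h⟩(x) = (1/(2π)) ∫₀^{2π} h(ψ t x) dt and {·,·} is the canonical Poisson bracket. -/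
open Real

/-- The canonical Hamiltonian vector field `X_H = (∂H/∂p, −∂H/∂q)` on ℝⁿ × ℝⁿ. -/
noncomputable def hamVF {n : ℕ} (H : ((Fin n → ℝ) × (Fin n → ℝ)) → ℝ)
    (x : (Fin n → ℝ) × (Fin n → ℝ)) : (Fin n → ℝ) × (Fin n → ℝ) :=
  (fun i => fderiv ℝ H x (0, Pi.single i 1),
   fun i => - fderiv ℝ H x (Pi.single i 1, 0))

/-- The canonical Poisson bracket `{f,g} = Σᵢ (∂f/∂qᵢ ∂g/∂pᵢ − ∂f/∂pᵢ ∂g/∂qᵢ)`. -/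
noncomputable def pbracket {n : ℕ} (f g : ((Fin n → ℝ) × (Fin n → ℝ)) → ℝ)
    (x : (Fin n → ℝ) × (Fin n → ℝ)) : ℝ :=
  ∑ i, (fderiv ℝ f x (Pi.single i 1, 0) * fderiv ℝ g x (0, Pi.single i 1)
      - fderiv ℝ f x (0, Pi.single i 1) * fderiv ℝ g x (Pi.single i 1, 0))

/-!
The vector field `u X_H` with `u = 1 / ω` satisfies `L_{u X_H} Ω = du ∧ dH` for the canonical
symplectic form `Ω`. The period `2π / ω` of the flow of `X_H` is a first integral, and so is `H`, so
the 2-form `du ∧ dH` is invariant under `ψ` and `ψ_t^* Ω = Ω + t du ∧ dH`. At `t = 2π` the left side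
is again `Ω`, so `du ∧ dH = 0` and every `ψ_t` is symplectic. Hence `ψ_t` preserves `X_g` for
invariant `g`, and `{f, g} ∘ ψ_t = {f ∘ ψ_t, g}`; it remains to differentiate `∫ f ∘ ψ_t dt` under
the integral sign. This requires the flow of a `C¹` vector field to be differentiable in the initial
point, which is proved by comparing it with the variational equation.
-/

open Set Metric Filter Topology MeasureTheory
open scoped NNReal

section LinearODE

variable {E : Type*} [NormedAddCommGroup E] [NormedSpace ℝ E]

theorem norm_le_gronwallBound_of_hasDerivWithinAt_Icc {r r' : ℝ → E} {δ K ε a b : ℝ}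
    (hr : ∀ t ∈ Icc a b, HasDerivWithinAt r (r' t) (Icc a b) t) (ha : ‖r a‖ ≤ δ)
    (bound : ∀ t ∈ Icc a b, ‖r' t‖ ≤ K * ‖r t‖ + ε) :
    ∀ t ∈ Icc a b, ‖r t‖ ≤ gronwallBound δ K ε (t - a) :=
  norm_le_gronwallBound_of_norm_deriv_right_le (fun t ht => (hr t ht).continuousWithinAt)
    (fun t ht => (hr t (Ico_subset_Icc_self ht)).mono_of_mem_nhdsWithin (Icc_mem_nhdsGE_of_mem ht))
    ha fun t ht => bound t (Ico_subset_Icc_self ht)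

/-- The radial retraction of a normed space onto the closed ball of radius `R > 0` around `0`. It
turns a linear vector field into a bounded one. -/
noncomputable def radialRetraction (R : ℝ) (y : E) : E := (R / max R ‖y‖) • y

theorem norm_radialRetraction_le_norm {R : ℝ} (hR : 0 < R) (y : E) :
    ‖radialRetraction R y‖ ≤ ‖y‖ := by
  have hmax : 0 < max R ‖y‖ := lt_max_of_lt_left hR
  rw [radialRetraction, norm_smul, Real.norm_of_nonneg (by positivity)]
  exact mul_le_of_le_one_left (norm_nonneg _) ((div_le_one hmax).2 (le_max_left _ _))

theorem norm_radialRetraction_le {R : ℝ} (hR : 0 < R) (y : E) : ‖radialRetraction R y‖ ≤ R := by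
  have hmax : 0 < max R ‖y‖ := lt_max_of_lt_left hR
  rw [radialRetraction, norm_smul, Real.norm_of_nonneg (by positivity), div_mul_eq_mul_div,
    div_le_iff₀ hmax]
  gcongr
  exact le_max_right _ _

theorem radialRetraction_of_norm_le {R : ℝ} (hR : 0 < R) {y : E} (hy : ‖y‖ ≤ R) :
    radialRetraction R y = y := by
  rw [radialRetraction, max_eq_left hy, div_self hR.ne', one_smul]

theorem lipschitzWith_radialRetraction {R : ℝ} (hR : 0 < R) :
    LipschitzWith 2 (radialRetraction R : E → E) := by
  refine LipschitzWith.of_dist_le_mul fun a b => ?_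
  have hma : 0 < max R ‖a‖ := lt_max_of_lt_left hR
  have hmb : 0 < max R ‖b‖ := lt_max_of_lt_left hR
  have hscalar : |R / max R ‖a‖ - R / max R ‖b‖| * ‖b‖ ≤ ‖a - b‖ := by
    have hsub : R / max R ‖a‖ - R / max R ‖b‖ =
        R / max R ‖a‖ * ((max R ‖b‖ - max R ‖a‖) / max R ‖b‖) := by
      field_simp
    have hmax : |max R ‖b‖ - max R ‖a‖| ≤ ‖a - b‖ := by
      rw [norm_sub_rev]
      exact (abs_max_sub_max_le_max R ‖b‖ R ‖a‖).trans (by simpa using abs_norm_sub_norm_le b a)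
    calc |R / max R ‖a‖ - R / max R ‖b‖| * ‖b‖
        = R / max R ‖a‖ * |max R ‖b‖ - max R ‖a‖| * (‖b‖ / max R ‖b‖) := by
          rw [hsub, abs_mul, abs_of_pos (div_pos hR hma), abs_div, abs_of_pos hmb]
          ring
      _ ≤ 1 * ‖a - b‖ * 1 := by
          gcongr
          · exact (div_le_one hma).2 (le_max_left _ _)
          · exact (div_le_one hmb).2 (le_max_right _ _)
      _ = ‖a - b‖ := by ring
  rw [dist_eq_norm, dist_eq_norm]
  calc ‖radialRetraction R a - radialRetraction R b‖
      = ‖(R / max R ‖a‖) • (a - b) + (R / max R ‖a‖ - R / max R ‖b‖) • b‖ := by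
        simp only [radialRetraction]
        congr 1
        module
    _ ≤ ‖(R / max R ‖a‖) • (a - b)‖ + ‖(R / max R ‖a‖ - R / max R ‖b‖) • b‖ := norm_add_le _ _
    _ ≤ 1 * ‖a - b‖ + ‖a - b‖ := by
        rw [norm_smul, norm_smul, Real.norm_of_nonneg (div_pos hR hma).le]
        gcongr
        · exact (div_le_one hma).2 (le_max_left _ _)
        · exact hscalar
    _ = (2 : ℝ≥0) * ‖a - b‖ := by
        rw [NNReal.coe_ofNat]
        ring

theorem exists_isIntegralCurveOn_truncated_linear [CompleteSpace E] {B : ℝ → E →L[ℝ] E} {a b : ℝ}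
    (hab : a ≤ b) (hB : ContinuousOn B (Icc a b)) (y₀ : E) {R : ℝ} (hR : 0 < R) :
    ∃ y : ℝ → E, y a = y₀ ∧
      IsIntegralCurveOn y (fun t z => B t (radialRetraction R z)) (Icc a b) := by
  obtain ⟨K, hK⟩ := isCompact_Icc.exists_bound_of_continuousOn hB
  lift K to ℝ≥0 using (norm_nonneg _).trans (hK a ⟨le_rfl, hab⟩)
  lift R to ℝ≥0 using hR.le
  have hPL : IsPicardLindelof (fun t z => B t (radialRetraction R z)) (⟨a, le_rfl, hab⟩ : Icc a b)
      y₀ (K * R * (b - a).toNNReal) 0 (K * R) (K * 2) := by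
    refine ⟨fun t ht => ?_, fun y _ => hB.clm_apply continuousOn_const, fun t ht y _ => ?_, ?_⟩
    · exact (((B t).lipschitz.comp (lipschitzWith_radialRetraction hR)).weaken
        (mul_le_mul_left (show ‖B t‖₊ ≤ K from hK t ht) 2)).lipschitzOnWith
    · exact (B t).le_of_opNorm_le_of_le (hK t ht) (norm_radialRetraction_le hR y)
    · simp [hab]
  exact hPL.exists_eq_forall_mem_Icc_hasDerivWithinAt₀

theorem exists_isIntegralCurveOn_linear [CompleteSpace E] {B : ℝ → E →L[ℝ] E} {a b : ℝ}
    (hab : a ≤ b) (hB : ContinuousOn B (Icc a b)) (y₀ : E) :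
    ∃ y : ℝ → E, y a = y₀ ∧ IsIntegralCurveOn y (fun t z => B t z) (Icc a b) := by
  obtain ⟨K, hK⟩ := isCompact_Icc.exists_bound_of_continuousOn hB
  have hK0 : 0 ≤ K := (norm_nonneg _).trans (hK a ⟨le_rfl, hab⟩)
  -- Any radius above Grönwall's a priori bound for `‖y‖` makes the truncation invisible.
  set R : ℝ := ‖y₀‖ * exp (K * (b - a)) + 1
  have hR : 0 < R := by positivity
  obtain ⟨y, hya, hy⟩ := exists_isIntegralCurveOn_truncated_linear hab hB y₀ hR
  have hyR : ∀ t ∈ Icc a b, ‖y t‖ ≤ R := fun t ht =>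
    calc ‖y t‖ ≤ gronwallBound ‖y₀‖ K 0 (t - a) :=
          norm_le_gronwallBound_of_hasDerivWithinAt_Icc hy (by rw [hya]) (fun s hs => by
            rw [add_zero]
            exact (B s).le_of_opNorm_le_of_le (hK s hs) (norm_radialRetraction_le_norm hR _)) t ht
      _ = ‖y₀‖ * exp (K * (t - a)) := gronwallBound_ε0 _ _ _
      _ ≤ ‖y₀‖ * exp (K * (b - a)) := by
          gcongr
          exact ht.2
      _ ≤ R := by simp [R]
  exact ⟨y, hya, fun t ht => by
    simpa only [radialRetraction_of_norm_le hR (hyR t ht)] using hy t ht⟩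

end LinearODE

section UniformDifferentiability

variable {E F : Type*} [NormedAddCommGroup E] [NormedSpace ℝ E]
  [NormedAddCommGroup F] [NormedSpace ℝ F]

theorem exists_pos_norm_sub_sub_fderiv_le_of_isCompact {f : E → F} (hf : ContDiff ℝ 1 f)
    {K : Set E} (hK : IsCompact K) {ε : ℝ} (hε : 0 < ε) :
    ∃ δ > 0, ∀ a ∈ K, ∀ b, ‖b - a‖ < δ → ‖f b - f a - fderiv ℝ f a (b - a)‖ ≤ ε * ‖b - a‖ := by
  obtain ⟨δ, hδ, hdist⟩ := mem_uniformity_dist.1 <|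
    hK.uniformContinuousAt_of_continuousAt (fderiv ℝ f)
      (fun a _ => (hf.continuous_fderiv one_ne_zero).continuousAt) (dist_mem_uniformity hε)
  refine ⟨δ, hδ, fun a ha b hab => (convex_ball a δ).norm_image_sub_le_of_norm_fderiv_le'
    (fun z _ => hf.differentiable one_ne_zero z) (fun z hz => ?_) (mem_ball_self hδ)
    (mem_ball_iff_norm.2 hab)⟩
  rw [← dist_eq_norm, dist_comm]
  exact (hdist (mem_ball'.1 hz) ha).le

theorem exists_pos_norm_sub_le_of_isCompact {f : E → F} (hf : ContDiff ℝ 1 f)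
    {K : Set E} (hK : IsCompact K) :
    ∃ C : ℝ≥0, ∃ δ > 0, ∀ a ∈ K, ∀ b, ‖b - a‖ < δ → ‖f b - f a‖ ≤ C * ‖b - a‖ := by
  obtain ⟨D, hD⟩ :=
    hK.exists_bound_of_continuousOn (hf.continuous_fderiv one_ne_zero).continuousOn
  obtain ⟨δ, hδ, hrem⟩ := exists_pos_norm_sub_sub_fderiv_le_of_isCompact hf hK one_pos
  refine ⟨D.toNNReal + 1, δ, hδ, fun a ha b hab => ?_⟩
  calc ‖f b - f a‖
      = ‖fderiv ℝ f a (b - a) + (f b - f a - fderiv ℝ f a (b - a))‖ := by rw [add_sub_cancel]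
    _ ≤ D.toNNReal * ‖b - a‖ + 1 * ‖b - a‖ := norm_add_le_of_le
        ((fderiv ℝ f a).le_of_opNorm_le ((hD a ha).trans (Real.le_coe_toNNReal D)) _)
        (hrem a ha b hab)
    _ = (D.toNNReal + 1 : ℝ≥0) * ‖b - a‖ := by push_cast; ring

end UniformDifferentiability

/-- `IsFlow ψ V` says that `ψ` is the complete flow of the vector field `V`, with `ψ t x` the point
reached at time `t` from `x`. Unlike for Mathlib's `Flow`, joint continuity is not assumed. -/
structure IsFlow {E : Type*} [NormedAddCommGroup E] [NormedSpace ℝ E]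
    (ψ : ℝ → E → E) (V : E → E) : Prop where
  zero_apply : ∀ x, ψ 0 x = x
  add_apply : ∀ s t x, ψ (s + t) x = ψ s (ψ t x)
  isIntegralCurve : ∀ x, IsIntegralCurve (fun t => ψ t x) fun _ => V

namespace IsFlow

variable {E F : Type*} [NormedAddCommGroup E] [NormedSpace ℝ E]
  [NormedAddCommGroup F] [NormedSpace ℝ F] {V : E → E} {ψ : ℝ → E → E}

theorem reverse (hψ : IsFlow ψ V) : IsFlow (fun t => ψ (-t)) (-V) where
  zero_apply x := by rw [neg_zero, hψ.zero_apply]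
  add_apply s t x := by rw [neg_add, hψ.add_apply]
  isIntegralCurve x t := by
    simpa [Function.comp_def] using (hψ.isIntegralCurve x (-t)).scomp t (hasDerivAt_neg t)

theorem continuous_left (hψ : IsFlow ψ V) (x : E) : Continuous fun t => ψ t x :=
  (hψ.isIntegralCurve x).continuous

theorem isCompact_image_Icc (hψ : IsFlow ψ V) (x : E) (a b : ℝ) :
    IsCompact ((fun t => ψ t x) '' Icc a b) :=
  isCompact_Icc.image (hψ.continuous_left x)

theorem exists_eventually_norm_sub_le_of_nonneg (hψ : IsFlow ψ V) (hV : ContDiff ℝ 1 V) (x : E)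
    (L : ℝ) :
    ∃ C : ℝ≥0, ∀ᶠ y in 𝓝 x, ∀ t ∈ Icc 0 L, ‖ψ t y - ψ t x‖ ≤ C * ‖y - x‖ := by
  obtain ⟨K, δ, hδ, hK⟩ := exists_pos_norm_sub_le_of_isCompact hV (hψ.isCompact_image_Icc x 0 L)
  set C : ℝ≥0 := ⟨exp ((K + 1) * L), (exp_pos _).le⟩
  have hsmall : ∀ᶠ y in 𝓝 x, C * ‖y - x‖ < δ :=
    (show Continuous fun y => C * ‖y - x‖ by fun_prop).continuousAt.eventually_lt_const (by simpa)
  refine ⟨C, ?_⟩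
  filter_upwards [hsmall] with y hy
  rcases eq_or_ne y x with rfl | hne
  · simp
  have hpos : 0 < ‖y - x‖ := norm_sub_pos_iff.2 hne
  have hexp : ∀ t ∈ Icc 0 L, ‖y - x‖ * exp ((K + 1) * t) ≤ C * ‖y - x‖ := fun t ht => by
    rw [mul_comm]
    exact mul_le_mul_of_nonneg_right (exp_le_exp.2 (by gcongr; exact ht.2)) hpos.le
  -- As long as `‖ψ t y - ψ t x‖` has not crossed the barrier `‖y - x‖ exp ((K + 1) t)`, the
  -- Lipschitz bound applies and it grows strictly slower than the barrier.
  refine fun t ht => (image_norm_le_of_norm_deriv_right_lt_deriv_boundary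
    (f := fun t => ψ t y - ψ t x) (f' := fun t => V (ψ t y) - V (ψ t x))
    (B := fun t => ‖y - x‖ * exp ((K + 1) * t))
    (B' := fun t => (K + 1) * (‖y - x‖ * exp ((K + 1) * t)))
    ((hψ.continuous_left y).sub (hψ.continuous_left x)).continuousOn
    (fun s _ => ((hψ.isIntegralCurve y s).sub (hψ.isIntegralCurve x s)).hasDerivWithinAt)
    (by simp [hψ.zero_apply]) (fun s => ?_) (fun s hs hEq => ?_) ht).trans (hexp t ht)
  · exact (((hasDerivAt_id' s).const_mul ((K : ℝ) + 1)).exp.const_mul ‖y - x‖).congr_deriv (by ring)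
  · have hs' := Ico_subset_Icc_self hs
    calc ‖V (ψ s y) - V (ψ s x)‖
        ≤ K * ‖ψ s y - ψ s x‖ := hK _ (mem_image_of_mem _ hs') _
          (hEq.trans_lt ((hexp s hs').trans_lt hy))
      _ = K * (‖y - x‖ * exp ((K + 1) * s)) := by rw [hEq]
      _ < (K + 1) * (‖y - x‖ * exp ((K + 1) * s)) := by
          gcongr
          exact lt_add_one _

theorem exists_eventually_norm_sub_le (hψ : IsFlow ψ V) (hV : ContDiff ℝ 1 V) (x : E) (L : ℝ) :
    ∃ C : ℝ≥0, ∀ᶠ y in 𝓝 x, ∀ t ∈ Icc (-L) L, ‖ψ t y - ψ t x‖ ≤ C * ‖y - x‖ := by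
  obtain ⟨C₁, hC₁⟩ := hψ.exists_eventually_norm_sub_le_of_nonneg hV x L
  obtain ⟨C₂, hC₂⟩ := hψ.reverse.exists_eventually_norm_sub_le_of_nonneg hV.neg x L
  refine ⟨max C₁ C₂, ?_⟩
  filter_upwards [hC₁, hC₂] with y hy₁ hy₂ t ht
  rcases le_total 0 t with h0 | h0
  · refine (hy₁ t ⟨h0, ht.2⟩).trans ?_
    gcongr
    exact le_max_left _ _
  · have hreverse := hy₂ (-t) ⟨neg_nonneg.2 h0, neg_le.1 ht.1⟩
    rw [neg_neg] at hreverse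
    refine hreverse.trans ?_
    gcongr
    exact le_max_right _ _

theorem eventually_norm_sub_lt (hψ : IsFlow ψ V) (hV : ContDiff ℝ 1 V) (x : E) (L : ℝ)
    {δ : ℝ} (hδ : 0 < δ) : ∀ᶠ y in 𝓝 x, ∀ t ∈ Icc (-L) L, ‖ψ t y - ψ t x‖ < δ := by
  obtain ⟨C, hC⟩ := hψ.exists_eventually_norm_sub_le hV x L
  have hsmall : ∀ᶠ y in 𝓝 x, C * ‖y - x‖ < δ :=
    (show Continuous fun y => C * ‖y - x‖ by fun_prop).continuousAt.eventually_lt_const (by simpa)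
  filter_upwards [hC, hsmall] with y hy hlt t ht using (hy t ht).trans_lt hlt

theorem exists_eventually_norm_comp_sub_le (hψ : IsFlow ψ V) (hV : ContDiff ℝ 1 V) {f : E → F}
    (hf : ContDiff ℝ 1 f) (x : E) (L : ℝ) :
    ∃ C : ℝ≥0, ∀ᶠ y in 𝓝 x, ∀ t ∈ Icc (-L) L, ‖f (ψ t y) - f (ψ t x)‖ ≤ C * ‖y - x‖ := by
  obtain ⟨C, hC⟩ := hψ.exists_eventually_norm_sub_le hV x L
  obtain ⟨D, δ, hδ, hD⟩ :=
    exists_pos_norm_sub_le_of_isCompact hf (hψ.isCompact_image_Icc x (-L) L)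
  refine ⟨D * C, ?_⟩
  filter_upwards [hC, hψ.eventually_norm_sub_lt hV x L hδ] with y hy hlt t ht
  calc ‖f (ψ t y) - f (ψ t x)‖
      ≤ D * ‖ψ t y - ψ t x‖ := hD _ (mem_image_of_mem _ ht) _ (hlt t ht)
    _ ≤ D * (C * ‖y - x‖) := by
        gcongr
        exact hy t ht
    _ = (D * C : ℝ≥0) * ‖y - x‖ := by push_cast; ring

/-- `M` solves the variational equation `Ṁ = DV(ψ_t x) ∘ M`, `M 0 = id`, on the time set `s`. -/
structure IsVariationalSolution (ψ : ℝ → E → E) (V : E → E) (x : E) (M : ℝ → E →L[ℝ] E)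
    (s : Set ℝ) : Prop where
  zero_eq_id : M 0 = .id ℝ E
  isIntegralCurveOn : IsIntegralCurveOn M (fun t N => fderiv ℝ V (ψ t x) ∘L N) s

theorem continuous_fderiv_vectorField (hψ : IsFlow ψ V) (hV : ContDiff ℝ 1 V) (x : E) :
    Continuous fun t => fderiv ℝ V (ψ t x) :=
  (hV.continuous_fderiv one_ne_zero).comp (hψ.continuous_left x)

theorem exists_isVariationalSolution [CompleteSpace E] (hψ : IsFlow ψ V) (hV : ContDiff ℝ 1 V)
    (x : E) {L : ℝ} (hL : 0 ≤ L) :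
    ∃ M : ℝ → E →L[ℝ] E, IsVariationalSolution ψ V x M (Icc 0 L) := by
  obtain ⟨M, hM₀, hM⟩ := exists_isIntegralCurveOn_linear
    (B := fun t => ContinuousLinearMap.compL ℝ E E E (fderiv ℝ V (ψ t x))) hL
    ((ContinuousLinearMap.compL ℝ E E E).continuous.comp
      (hψ.continuous_fderiv_vectorField hV x)).continuousOn (.id ℝ E)
  exact ⟨M, hM₀, hM⟩

theorem norm_sub_sub_variational_le (hψ : IsFlow ψ V) {x y : E} {L K η : ℝ} {M : ℝ → E →L[ℝ] E}
    (hM : IsVariationalSolution ψ V x M (Icc 0 L))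
    (hK : ∀ t ∈ Icc 0 L, ‖fderiv ℝ V (ψ t x)‖ ≤ K)
    (hη : ∀ t ∈ Icc 0 L,
      ‖V (ψ t y) - V (ψ t x) - fderiv ℝ V (ψ t x) (ψ t y - ψ t x)‖ ≤ η) {t : ℝ}
    (ht : t ∈ Icc 0 L) :
    ‖ψ t y - ψ t x - M t (y - x)‖ ≤ gronwallBound 0 K η t := by
  have hderiv : ∀ s ∈ Icc 0 L, HasDerivWithinAt (fun s => ψ s y - ψ s x - M s (y - x))
      (V (ψ s y) - V (ψ s x) - fderiv ℝ V (ψ s x) (M s (y - x))) (Icc 0 L) s := fun s hs =>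
    ((hψ.isIntegralCurve y s).sub (hψ.isIntegralCurve x s)).hasDerivWithinAt.sub
      (by simpa using (hM.isIntegralCurveOn s hs).clm_apply (hasDerivWithinAt_const s _ (y - x)))
  simpa using norm_le_gronwallBound_of_hasDerivWithinAt_Icc hderiv
    (by simp [hψ.zero_apply, hM.zero_eq_id]) (fun s hs => by
      have hsplit : V (ψ s y) - V (ψ s x) - fderiv ℝ V (ψ s x) (M s (y - x)) =
          fderiv ℝ V (ψ s x) (ψ s y - ψ s x - M s (y - x)) +
            (V (ψ s y) - V (ψ s x) - fderiv ℝ V (ψ s x) (ψ s y - ψ s x)) := by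
        simp only [map_sub]
        abel
      rw [hsplit]
      exact norm_add_le_of_le ((fderiv ℝ V (ψ s x)).le_of_opNorm_le (hK s hs) _) (hη s hs)) t ht

theorem hasFDerivAt_of_isVariationalSolution (hψ : IsFlow ψ V) (hV : ContDiff ℝ 1 V) {x : E}
    {L : ℝ} {M : ℝ → E →L[ℝ] E} (hM : IsVariationalSolution ψ V x M (Icc 0 L)) {t : ℝ}
    (ht : t ∈ Icc 0 L) : HasFDerivAt (ψ t) (M t) x := by
  have hIcc : Icc 0 L ⊆ Icc (-L) L := Icc_subset_Icc_left (neg_nonpos.2 (ht.1.trans ht.2))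
  obtain ⟨K₀, hK₀⟩ := isCompact_Icc.exists_bound_of_continuousOn
    (hψ.continuous_fderiv_vectorField hV x).continuousOn (s := Icc 0 L)
  set K : ℝ := max K₀ 1
  have hK : K ≠ 0 := (lt_max_of_lt_right one_pos).ne'
  obtain ⟨C, hC⟩ := hψ.exists_eventually_norm_sub_le hV x L
  refine .of_isLittleO (Asymptotics.isLittleO_iff.2 fun c hc => ?_)
  obtain ⟨ε, hε, hεc⟩ := exists_pos_mul_lt hc (C / K * (exp (K * t) - 1))
  obtain ⟨δ, hδ, hrem⟩ :=
    exists_pos_norm_sub_sub_fderiv_le_of_isCompact hV (hψ.isCompact_image_Icc x 0 L) hε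
  filter_upwards [hC, hψ.eventually_norm_sub_lt hV x L hδ] with y hy hlt
  have hη : ∀ s ∈ Icc 0 L, ‖V (ψ s y) - V (ψ s x) - fderiv ℝ V (ψ s x) (ψ s y - ψ s x)‖ ≤
      ε * (C * ‖y - x‖) := fun s hs =>
    (hrem _ (mem_image_of_mem _ hs) _ (hlt s (hIcc hs))).trans <| by
      gcongr
      exact hy s (hIcc hs)
  calc ‖ψ t y - ψ t x - M t (y - x)‖
      ≤ gronwallBound 0 K (ε * (C * ‖y - x‖)) t :=
        hψ.norm_sub_sub_variational_le hM (fun s hs => (hK₀ s hs).trans (le_max_left _ _)) hη ht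
    _ = C / K * (exp (K * t) - 1) * ε * ‖y - x‖ := by
        rw [gronwallBound_of_K_ne_0 hK]
        ring
    _ ≤ c * ‖y - x‖ := by gcongr

theorem differentiable [CompleteSpace E] (hψ : IsFlow ψ V) (hV : ContDiff ℝ 1 V) (t : ℝ) :
    Differentiable ℝ (ψ t) := by
  have hnonneg : ∀ {θ : ℝ → E → E} {W : E → E}, IsFlow θ W → ContDiff ℝ 1 W → ∀ s ≥ 0,
      Differentiable ℝ (θ s) := fun hθ hW s hs x => by
    obtain ⟨M, hM⟩ := hθ.exists_isVariationalSolution hW x hs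
    exact (hθ.hasFDerivAt_of_isVariationalSolution hW hM ⟨hs, le_rfl⟩).differentiableAt
  rcases le_total 0 t with ht | ht
  · exact hnonneg hψ hV t ht
  · simpa using hnonneg hψ.reverse hV.neg (-t) (neg_nonneg.2 ht)

theorem fderiv_add [CompleteSpace E] (hψ : IsFlow ψ V) (hV : ContDiff ℝ 1 V) (s t : ℝ) (x : E) :
    fderiv ℝ (ψ (s + t)) x = fderiv ℝ (ψ s) (ψ t x) ∘L fderiv ℝ (ψ t) x := by
  rw [show ψ (s + t) = ψ s ∘ ψ t from funext (hψ.add_apply s t)]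
  exact fderiv_comp x (hψ.differentiable hV s _) (hψ.differentiable hV t x)

theorem fderiv_zero (hψ : IsFlow ψ V) (x : E) : fderiv ℝ (ψ 0) x = .id ℝ E := by
  rw [show ψ 0 = id from funext hψ.zero_apply, fderiv_id]

theorem hasDerivAt_fderiv [CompleteSpace E] (hψ : IsFlow ψ V) (hV : ContDiff ℝ 1 V) (t : ℝ)
    (x : E) :
    HasDerivAt (fun s => fderiv ℝ (ψ s) x) (fderiv ℝ V (ψ t x) ∘L fderiv ℝ (ψ t) x) t := by
  -- The group law reduces the claim to time `1`, an interior point of `[0, 2]`.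
  set z := ψ (t - 1) x
  obtain ⟨M, hM⟩ := hψ.exists_isVariationalSolution hV z zero_le_two
  have hMψ : ∀ s ∈ Icc (0 : ℝ) 2, fderiv ℝ (ψ s) z = M s := fun s hs =>
    (hψ.hasFDerivAt_of_isVariationalSolution hV hM hs).fderiv
  have hnhds : Icc (0 : ℝ) 2 ∈ 𝓝 1 := Icc_mem_nhds one_pos one_lt_two
  have hone : HasDerivAt (fun s => fderiv ℝ (ψ s) z)
      (fderiv ℝ V (ψ 1 z) ∘L fderiv ℝ (ψ 1) z) 1 := by
    rw [hMψ 1 (mem_of_mem_nhds hnhds)]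
    exact ((hM.isIntegralCurveOn 1 (mem_of_mem_nhds hnhds)).hasDerivAt hnhds).congr_of_eventuallyEq
      (eventually_of_mem hnhds hMψ)
  have hshift : HasDerivAt (fun s => fderiv ℝ (ψ (s - (t - 1))) z)
      (fderiv ℝ V (ψ 1 z) ∘L fderiv ℝ (ψ 1) z) t :=
    HasDerivAt.comp_sub_const t (t - 1) (by rwa [sub_sub_cancel])
  have hcocycle : ∀ s, fderiv ℝ (ψ s) x =
      fderiv ℝ (ψ (s - (t - 1))) z ∘L fderiv ℝ (ψ (t - 1)) x := fun s => by
    rw [← hψ.fderiv_add hV, sub_add_cancel]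
  have hz : ψ 1 z = ψ t x := by rw [← hψ.add_apply, add_sub_cancel]
  have hcomp := hshift.clm_comp (hasDerivAt_const t (fderiv ℝ (ψ (t - 1)) x))
  refine (hcomp.congr_of_eventuallyEq (.of_forall hcocycle)).congr_deriv ?_
  rw [hz, ContinuousLinearMap.comp_zero, add_zero, ContinuousLinearMap.comp_assoc,
    ← hψ.fderiv_add hV, add_sub_cancel]

theorem continuous_fderiv [CompleteSpace E] (hψ : IsFlow ψ V) (hV : ContDiff ℝ 1 V) (x : E) :
    Continuous fun t => fderiv ℝ (ψ t) x :=
  continuous_iff_continuousAt.2 fun t => (hψ.hasDerivAt_fderiv hV t x).continuousAt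

theorem continuous_fderiv_comp [CompleteSpace E] (hψ : IsFlow ψ V) (hV : ContDiff ℝ 1 V)
    {f : E → F} (hf : ContDiff ℝ 1 f) (x : E) :
    Continuous fun t => fderiv ℝ f (ψ t x) ∘L fderiv ℝ (ψ t) x :=
  ((hf.continuous_fderiv one_ne_zero).comp (hψ.continuous_left x)).clm_comp
    (hψ.continuous_fderiv hV x)

theorem hasFDerivAt_integral_comp [CompleteSpace E] (hψ : IsFlow ψ V) (hV : ContDiff ℝ 1 V)
    {f : E → F} (hf : ContDiff ℝ 1 f) (a b : ℝ) (x : E) :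
    HasFDerivAt (fun y => ∫ t in a..b, f (ψ t y))
      (∫ t in a..b, fderiv ℝ f (ψ t x) ∘L fderiv ℝ (ψ t) x) x := by
  have hIcc : uIoc a b ⊆ Icc (-max |a| |b|) (max |a| |b|) := uIoc_subset_uIcc.trans <|
    uIcc_subset_Icc (abs_le.1 (le_max_left _ _)) (abs_le.1 (le_max_right _ _))
  have hcont : ∀ y, Continuous fun t => f (ψ t y) := fun y =>
    hf.continuous.comp (hψ.continuous_left y)
  obtain ⟨C, hC⟩ := hψ.exists_eventually_norm_comp_sub_le hV hf x (max |a| |b|)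
  simp only [intervalIntegral.intervalIntegral_eq_integral_uIoc]
  refine (hasFDerivAt_integral_of_dominated_loc_of_lip' (bound := fun _ => C) hC
    (fun y _ => (hcont y).aestronglyMeasurable)
    (hcont x).integrableOn_uIoc (hψ.continuous_fderiv_comp hV hf x).aestronglyMeasurable
    ?_ continuous_const.integrableOn_uIoc ?_).2.const_smul _
  · filter_upwards [ae_restrict_mem measurableSet_uIoc] with t ht y hy using hy t (hIcc ht)
  · exact .of_forall fun t => (hf.differentiable one_ne_zero _).hasFDerivAt.comp x
      (hψ.differentiable hV t x).hasFDerivAt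

theorem comp_eq_of_fderiv_apply_eq_zero (hψ : IsFlow ψ V) {f : E → F} (hf : Differentiable ℝ f)
    (hfV : ∀ x, fderiv ℝ f x (V x) = 0) (t : ℝ) : f ∘ ψ t = f := by
  funext x
  have hderiv : ∀ s, HasDerivAt (fun s => f (ψ s x)) 0 s := fun s =>
    ((hf (ψ s x)).hasFDerivAt.comp_hasDerivAt s (hψ.isIntegralCurve x s)).congr_deriv (hfV _)
  simpa [hψ.zero_apply] using is_const_of_deriv_eq_zero (fun s => (hderiv s).differentiableAt)
    (fun s => (hderiv s).deriv) t 0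

theorem fderiv_period_apply_eq_zero (hψ : IsFlow ψ V) {T : E → ℝ} (hT : Differentiable ℝ T)
    (hper : ∀ x, ψ (T x) x = x) (x : E) : fderiv ℝ T x (V x) = 0 := by
  -- Every point of the orbit of `x` has period `T x`, so `s ↦ ψ (T (ψ s x)) x` is constant; its
  -- derivative at `0` is `(DT_x (V x)) • V x`.
  have hconst : ∀ s, ψ (T (ψ s x)) x = x := fun s => by
    have hs : ψ s (ψ (T (ψ s x)) x) = ψ s x := by
      rw [← hψ.add_apply, add_comm, hψ.add_apply, hper]
    simpa only [← hψ.add_apply, neg_add_cancel, neg_add_cancel_left, hψ.zero_apply,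
      ← add_assoc, zero_add] using congrArg (ψ (-s)) hs
  have hTψ : HasDerivAt (fun s => T (ψ s x)) (fderiv ℝ T x (V x)) 0 :=
    ((hT (ψ 0 x)).hasFDerivAt.comp_hasDerivAt (0 : ℝ) (hψ.isIntegralCurve x 0)).congr_deriv
      (by simp only [hψ.zero_apply])
  have hsmul : HasDerivAt (fun _ : ℝ => x) (fderiv ℝ T x (V x) • V x) 0 :=
    (((hψ.isIntegralCurve x (T (ψ 0 x))).scomp 0 hTψ).congr_of_eventuallyEq
      (.of_forall fun s => (hconst s).symm)).congr_deriv (by simp only [hconst])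
  rcases smul_eq_zero.1 (hsmul.unique (hasDerivAt_const _ _)) with h | h
  · exact h
  · rw [h, map_zero]

theorem bilinear_fderiv_apply_eq_add_smul [CompleteSpace E] (hψ : IsFlow ψ V)
    (hV : ContDiff ℝ 1 V) (B : E →L[ℝ] E →L[ℝ] F) {x a b : E} {c : F}
    (hc : ∀ t, B (fderiv ℝ V (ψ t x) (fderiv ℝ (ψ t) x a)) (fderiv ℝ (ψ t) x b) +
      B (fderiv ℝ (ψ t) x a) (fderiv ℝ V (ψ t x) (fderiv ℝ (ψ t) x b)) = c) (t : ℝ) :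
    B (fderiv ℝ (ψ t) x a) (fderiv ℝ (ψ t) x b) = B a b + t • c := by
  have happly : ∀ s v, HasDerivAt (fun s => fderiv ℝ (ψ s) x v)
      (fderiv ℝ V (ψ s x) (fderiv ℝ (ψ s) x v)) s := fun s v => by
    simpa using (hψ.hasDerivAt_fderiv hV s x).clm_apply (hasDerivAt_const s v)
  have hderiv : ∀ s, HasDerivAt
      (fun s => B (fderiv ℝ (ψ s) x a) (fderiv ℝ (ψ s) x b) - s • c) 0 s := fun s =>
    (((B.hasFDerivAt.comp_hasDerivAt s (happly s a)).clm_apply (happly s b)).sub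
      ((hasDerivAt_id' s).smul_const c)).congr_deriv
        (by rw [Function.comp_apply, hc, one_smul, sub_self])
  refine sub_eq_iff_eq_add.1 ?_
  simpa [hψ.fderiv_zero] using is_const_of_deriv_eq_zero
    (fun s => (hderiv s).differentiableAt) (fun s => (hderiv s).deriv) t 0

end IsFlow

theorem fderiv_apply_of_comp_eq {E F : Type*} [NormedAddCommGroup E] [NormedSpace ℝ E]
    [NormedAddCommGroup F] [NormedSpace ℝ F] {f : E → F} {θ : E → E} {x : E}
    (hf : DifferentiableAt ℝ f (θ x)) (hθ : DifferentiableAt ℝ θ x) (hinv : f ∘ θ = f) (a : E) :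
    fderiv ℝ f (θ x) (fderiv ℝ θ x a) = fderiv ℝ f x a := by
  rw [← ContinuousLinearMap.comp_apply, ← fderiv_comp x hf hθ, hinv]

section HamiltonianMechanics

variable {n : ℕ}

/-- The phase space ℝⁿ × ℝⁿ with coordinates `(q, p)`. -/
abbrev PhaseSpace (n : ℕ) := (Fin n → ℝ) × (Fin n → ℝ)

/-- The canonical symplectic form `Ω = ∑ᵢ dqᵢ ∧ dpᵢ` on phase space, as a bilinear map. -/
noncomputable def symplecticForm (n : ℕ) : PhaseSpace n →L[ℝ] PhaseSpace n →L[ℝ] ℝ :=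
  let q (i : Fin n) : PhaseSpace n →L[ℝ] ℝ := .proj i ∘L .fst ℝ _ _
  let p (i : Fin n) : PhaseSpace n →L[ℝ] ℝ := .proj i ∘L .snd ℝ _ _
  ∑ i, ((q i).smulRight (p i) - (p i).smulRight (q i))

theorem symplecticForm_apply (a b : PhaseSpace n) :
    symplecticForm n a b = ∑ i, (a.1 i * b.2 i - a.2 i * b.1 i) := by
  simp [symplecticForm]

theorem symplecticForm_antisymm (a b : PhaseSpace n) :
    symplecticForm n a b = -symplecticForm n b a := by
  simp only [symplecticForm_apply, ← Finset.sum_neg_distrib]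
  exact Finset.sum_congr rfl fun i _ => by ring

theorem symplecticForm_injective : Function.Injective (symplecticForm n) := fun a b h => by
  ext i
  · simpa [symplecticForm_apply, Pi.single_apply] using DFunLike.congr_fun h (0, Pi.single i 1)
  · simpa [symplecticForm_apply, Pi.single_apply] using DFunLike.congr_fun h (Pi.single i 1, 0)

theorem PhaseSpace.clm_apply_eq_sum (ℓ : PhaseSpace n →L[ℝ] ℝ) (b : PhaseSpace n) :
    ℓ b = ∑ i, (b.1 i * ℓ (Pi.single i 1, 0) + b.2 i * ℓ (0, Pi.single i 1)) := by
  have hb : b =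
      ∑ i, (b.1 i • ((Pi.single i 1, 0) : PhaseSpace n) + b.2 i • (0, Pi.single i 1)) := by
    ext j <;> simp [Prod.fst_sum, Prod.snd_sum, Pi.single_apply]
  conv_lhs => rw [hb]
  simp only [map_sum, map_add, map_smul, smul_eq_mul]

theorem symplecticForm_hamVF (H : PhaseSpace n → ℝ) (x : PhaseSpace n) :
    symplecticForm n (hamVF H x) = fderiv ℝ H x := by
  refine ContinuousLinearMap.ext fun b => ?_
  rw [symplecticForm_apply, PhaseSpace.clm_apply_eq_sum (fderiv ℝ H x) b]
  exact Finset.sum_congr rfl fun i _ => by simp only [hamVF]; ring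

theorem fderiv_apply_hamVF_self (H : PhaseSpace n → ℝ) (x : PhaseSpace n) :
    fderiv ℝ H x (hamVF H x) = 0 := by
  rw [← symplecticForm_hamVF]
  exact self_eq_neg.1 (symplecticForm_antisymm _ _)

theorem pbracket_eq_fderiv_hamVF (f g : PhaseSpace n → ℝ) (x : PhaseSpace n) :
    pbracket f g x = fderiv ℝ f x (hamVF g x) := by
  rw [PhaseSpace.clm_apply_eq_sum (fderiv ℝ f x), pbracket]
  exact Finset.sum_congr rfl fun i _ => by simp only [hamVF]; ring

theorem pbracket_const_mul (c : ℝ) (f g : PhaseSpace n → ℝ) (x : PhaseSpace n) :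
    pbracket (fun y => c * f y) g x = c * pbracket f g x := by
  simp only [pbracket_eq_fderiv_hamVF, ← smul_eq_mul]
  rw [← Pi.smul_def, fderiv_const_smul_field]
  rfl

theorem contDiff_hamVF {H : PhaseSpace n → ℝ} {k m : WithTop ℕ∞} (hH : ContDiff ℝ k H)
    (hmk : m + 1 ≤ k) : ContDiff ℝ m (hamVF H) := by
  have hdH : ContDiff ℝ m (fderiv ℝ H) := hH.fderiv_right hmk
  exact (contDiff_pi.2 fun i => hdH.clm_apply contDiff_const).prodMk
    (contDiff_pi.2 fun i => (hdH.clm_apply contDiff_const).neg)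

theorem symplecticForm_fderiv_hamVF {H : PhaseSpace n → ℝ} (hH : ContDiff ℝ 2 H)
    (x a : PhaseSpace n) :
    symplecticForm n (fderiv ℝ (hamVF H) x a) = fderiv ℝ (fderiv ℝ H) x a := by
  have hX : DifferentiableAt ℝ (hamVF H) x :=
    (contDiff_hamVF hH one_add_one_eq_two.le).differentiable one_ne_zero x
  rw [← funext (symplecticForm_hamVF H)]
  exact DFunLike.congr_fun ((symplecticForm n).hasFDerivAt.comp x hX.hasFDerivAt).fderiv.symm a

theorem symplecticForm_fderiv_smul_hamVF {u H : PhaseSpace n → ℝ} (hu : Differentiable ℝ u)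
    (hH : ContDiff ℝ 2 H) (x a b : PhaseSpace n) :
    symplecticForm n (fderiv ℝ (fun y => u y • hamVF H y) x a) b +
        symplecticForm n a (fderiv ℝ (fun y => u y • hamVF H y) x b) =
      fderiv ℝ u x a * fderiv ℝ H x b - fderiv ℝ u x b * fderiv ℝ H x a := by
  have hX : DifferentiableAt ℝ (hamVF H) x :=
    (contDiff_hamVF hH one_add_one_eq_two.le).differentiable one_ne_zero x
  have hderiv : ∀ c d, symplecticForm n (fderiv ℝ (fun y => u y • hamVF H y) x c) d =
      u x * fderiv ℝ (fderiv ℝ H) x c d + fderiv ℝ u x c * fderiv ℝ H x d := fun c d => by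
    rw [fderiv_fun_smul (hu x) hX]
    simp [symplecticForm_fderiv_hamVF hH, symplecticForm_hamVF]
  have hsymm : fderiv ℝ (fderiv ℝ H) x a b = fderiv ℝ (fderiv ℝ H) x b a :=
    (hH.contDiffAt.isSymmSndFDerivAt (by simp)) a b
  rw [symplecticForm_antisymm a, hderiv, hderiv, hsymm]
  ring

/-- `θ` is symplectic at `x`: its derivative there preserves the canonical symplectic form. -/
structure IsSymplecticAt (θ : PhaseSpace n → PhaseSpace n) (x : PhaseSpace n) : Prop where
  differentiableAt : DifferentiableAt ℝ θ x
  symplecticForm_fderiv :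
    ∀ a b, symplecticForm n (fderiv ℝ θ x a) (fderiv ℝ θ x b) = symplecticForm n a b

namespace IsSymplecticAt

variable {θ : PhaseSpace n → PhaseSpace n} {x : PhaseSpace n}

theorem surjective_fderiv (hθ : IsSymplecticAt θ x) : Function.Surjective (fderiv ℝ θ x) := by
  have hinj : Function.Injective (fderiv ℝ θ x) := fun a b hab =>
    symplecticForm_injective <| ContinuousLinearMap.ext fun c => by
      rw [← hθ.symplecticForm_fderiv, hab, hθ.symplecticForm_fderiv]
  exact LinearMap.injective_iff_surjective (f := (fderiv ℝ θ x).toLinearMap).1 hinj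

theorem fderiv_apply_hamVF (hθ : IsSymplecticAt θ x) {g : PhaseSpace n → ℝ}
    (hg : DifferentiableAt ℝ g (θ x)) (hinv : g ∘ θ = g) :
    fderiv ℝ θ x (hamVF g x) = hamVF g (θ x) := by
  refine symplecticForm_injective <| ContinuousLinearMap.ext <|
    hθ.surjective_fderiv.forall.2 fun b => ?_
  rw [hθ.symplecticForm_fderiv, symplecticForm_hamVF, symplecticForm_hamVF,
    fderiv_apply_of_comp_eq hg hθ.differentiableAt hinv]

end IsSymplecticAt

namespace IsFlow

theorem isSymplecticAt_of_smul_hamVF_of_periodic {ψ : ℝ → PhaseSpace n → PhaseSpace n}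
    {u H : PhaseSpace n → ℝ} (hψ : IsFlow ψ fun x => u x • hamVF H x)
    (hu : ContDiff ℝ 1 u) (hH : ContDiff ℝ 2 H)
    (huH : ∀ x, fderiv ℝ u x (hamVF H x) = 0) {T : ℝ} (hT : T ≠ 0) (hper : ψ T = id)
    (t : ℝ) (x : PhaseSpace n) : IsSymplecticAt (ψ t) x := by
  have hV : ContDiff ℝ 1 fun x => u x • hamVF H x :=
    hu.smul (contDiff_hamVF hH one_add_one_eq_two.le)
  have hud : Differentiable ℝ u := hu.differentiable one_ne_zero
  have hHd : Differentiable ℝ H := hH.differentiable two_ne_zero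
  have hdu : ∀ s v, fderiv ℝ u (ψ s x) (fderiv ℝ (ψ s) x v) = fderiv ℝ u x v := fun s =>
    fderiv_apply_of_comp_eq (hud _) (hψ.differentiable hV s x) <|
      hψ.comp_eq_of_fderiv_apply_eq_zero hud (fun y => by rw [map_smul, huH, smul_zero]) s
  have hdH : ∀ s v, fderiv ℝ H (ψ s x) (fderiv ℝ (ψ s) x v) = fderiv ℝ H x v := fun s =>
    fderiv_apply_of_comp_eq (hHd _) (hψ.differentiable hV s x) <|
      hψ.comp_eq_of_fderiv_apply_eq_zero hHd
        (fun y => by rw [map_smul, fderiv_apply_hamVF_self, smul_zero]) s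
  refine ⟨hψ.differentiable hV t x, fun a b => ?_⟩
  set c : ℝ := fderiv ℝ u x a * fderiv ℝ H x b - fderiv ℝ u x b * fderiv ℝ H x a
  have hgrowth : ∀ s, symplecticForm n (fderiv ℝ (ψ s) x a) (fderiv ℝ (ψ s) x b) =
      symplecticForm n a b + s • c :=
    hψ.bilinear_fderiv_apply_eq_add_smul hV (symplecticForm n) fun s => by
      rw [symplecticForm_fderiv_smul_hamVF hud hH, hdu, hdu, hdH, hdH]
  have hc : c = 0 := by simpa [hper, hT] using hgrowth T
  rw [hgrowth, hc, smul_zero, add_zero]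

theorem integral_pbracket_comp {V : PhaseSpace n → PhaseSpace n}
    {ψ : ℝ → PhaseSpace n → PhaseSpace n} (hψ : IsFlow ψ V) (hV : ContDiff ℝ 1 V)
    {x : PhaseSpace n} (hsymp : ∀ t, IsSymplecticAt (ψ t) x) {f g : PhaseSpace n → ℝ}
    (hf : ContDiff ℝ 1 f) (hg : Differentiable ℝ g) (hinv : ∀ t, g ∘ ψ t = g) (a b : ℝ) :
    ∫ t in a..b, pbracket f g (ψ t x) = pbracket (fun y => ∫ t in a..b, f (ψ t y)) g x := by
  rw [pbracket_eq_fderiv_hamVF, (hψ.hasFDerivAt_integral_comp hV hf a b x).fderiv,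
    ContinuousLinearMap.intervalIntegral_apply
      ((hψ.continuous_fderiv_comp hV hf x).intervalIntegrable a b)]
  congr 1 with t
  rw [pbracket_eq_fderiv_hamVF, ContinuousLinearMap.comp_apply,
    (hsymp t).fderiv_apply_hamVF (hg _) (hinv t)]

end IsFlow

/-- The average `⟨f⟩` of `f` along the orbits of a `2π`-periodic flow `ψ`. -/
noncomputable def orbitAverage (ψ : ℝ → PhaseSpace n → PhaseSpace n) (f : PhaseSpace n → ℝ)
    (x : PhaseSpace n) : ℝ :=
  (1 / (2 * π)) * ∫ t in (0 : ℝ)..(2 * π), f (ψ t x)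

theorem average_poisson_bracket_invariant_general {H ω : PhaseSpace n → ℝ} (hH : ContDiff ℝ 2 H)
    (hω : ContDiff ℝ 1 ω) (hω0 : ∀ x, ω x ≠ 0) {φ ψ : ℝ → PhaseSpace n → PhaseSpace n}
    (hφ : IsFlow φ (hamVF H)) (hφper : ∀ x, φ (2 * π / ω x) x = x)
    (hψ : IsFlow ψ fun x => (ω x)⁻¹ • hamVF H x) (hψper : ψ (2 * π) = id)
    {f g : PhaseSpace n → ℝ} (hf : ContDiff ℝ 1 f) (hg : Differentiable ℝ g)
    (hinv : ∀ t, g ∘ ψ t = g) :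
    orbitAverage ψ (pbracket f g) = pbracket (orbitAverage ψ f) g := by
  have hu : ContDiff ℝ 1 fun x => (ω x)⁻¹ := hω.inv hω0
  have huH : ∀ x, fderiv ℝ (fun y => (ω y)⁻¹) x (hamVF H x) = 0 := fun x => by
    have hud : Differentiable ℝ fun y => (ω y)⁻¹ := hu.differentiable one_ne_zero
    have hperiod := hφ.fderiv_period_apply_eq_zero (hud.const_mul (2 * π)) hφper x
    rw [fderiv_const_mul (hud x)] at hperiod
    simpa [pi_ne_zero] using hperiod
  have hsymp : ∀ t x, IsSymplecticAt (ψ t) x :=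
    hψ.isSymplecticAt_of_smul_hamVF_of_periodic hu hH huH two_pi_pos.ne' hψper
  funext x
  calc orbitAverage ψ (pbracket f g) x
      = 1 / (2 * π) * pbracket (fun y => ∫ t in (0 : ℝ)..(2 * π), f (ψ t y)) g x := by
        rw [orbitAverage, hψ.integral_pbracket_comp (hu.smul (contDiff_hamVF hH
          one_add_one_eq_two.le)) (fun t => hsymp t x) hf hg hinv]
    _ = pbracket (orbitAverage ψ f) g x := (pbracket_const_mul _ _ g x).symm

end HamiltonianMechanics

/-- Averaging along the S¹-action commutes with the Poisson bracket against
S¹-invariant functions: `⟨{f,g}⟩ = {⟨f⟩, g}`. -/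
theorem average_poisson_bracket_invariant
    {n : ℕ} (H : ((Fin n → ℝ) × (Fin n → ℝ)) → ℝ) (hH : ContDiff ℝ (⊤ : ℕ∞) H)
    (ω : ((Fin n → ℝ) × (Fin n → ℝ)) → ℝ) (hω : ContDiff ℝ (⊤ : ℕ∞) ω)
    (hωpos : ∀ x, 0 < ω x)
    (φ ψ : ℝ → ((Fin n → ℝ) × (Fin n → ℝ)) → ((Fin n → ℝ) × (Fin n → ℝ)))
    (hφ0 : ∀ x, φ 0 x = x) (hφadd : ∀ s t : ℝ, ∀ x, φ (s + t) x = φ s (φ t x))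
    (hφflow : ∀ t : ℝ, ∀ x, HasDerivAt (fun τ : ℝ => φ τ x) (hamVF H (φ t x)) t)
    (hφper : ∀ t : ℝ, ∀ x, φ (t + 2 * π / ω x) x = φ t x)
    (hψ0 : ∀ x, ψ 0 x = x) (hψadd : ∀ s t : ℝ, ∀ x, ψ (s + t) x = ψ s (ψ t x))
    (hψflow : ∀ t : ℝ, ∀ x, HasDerivAt (fun τ : ℝ => ψ τ x)
      ((ω (ψ t x))⁻¹ • hamVF H (ψ t x)) t)
    (hψper : ∀ t : ℝ, ∀ x, ψ (t + 2 * π) x = ψ t x)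
    (f g : ((Fin n → ℝ) × (Fin n → ℝ)) → ℝ)
    (hf : ContDiff ℝ (⊤ : ℕ∞) f) (hg : ContDiff ℝ (⊤ : ℕ∞) g)
    (hginv : ∀ t : ℝ, ∀ x, g (ψ t x) = g x) :
    ∀ x, (1 / (2 * π)) * ∫ t in (0:ℝ)..(2 * π), pbracket f g (ψ t x)
      = pbracket (fun y => (1 / (2 * π)) * ∫ t in (0:ℝ)..(2 * π), f (ψ t y)) g x := by
  exact congrFun <| average_poisson_bracket_invariant_general
    (hH.of_le (WithTop.coe_le_coe.2 (le_top (a := 2)))) (hω.of_le (by simp))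
    (fun x => (hωpos x).ne') ⟨hφ0, hφadd, fun x t => hφflow t x⟩
    (fun x => by simpa [hφ0] using hφper 0 x) ⟨hψ0, hψadd, fun x t => hψflow t x⟩
    (funext fun x => by simpa [hψ0] using hψper 0 x) (hf.of_le (by simp))
    (hg.differentiable (by simp)) fun t => funext (hginv t)
end

section
/- The average of a Hamiltonian vector field is the Hamiltonian vector field of the average: let H : ℝⁿ×ℝⁿ → ℝ be smooth with complete canonical Hamiltonian vector field X_H whose flow is periodic with smooth frequency function ω > 0, and let ψ be the 2π-periodic flow of the generator Υ = (1/ω) X_H. For a smooth g : ℝⁿ×ℝⁿ → ℝ define the averaged vector field ⟨X_g⟩(x) = (1/(2π)) ∫₀^{2π} Dψ_{−t}(ψ_t x)[X_g(ψ_t x)] dt (the average of the pullbacks of X_g by ψ_t) and the averaged function ⟨g⟩(x) = (1/(2π)) ∫₀^{2π} g(ψ t x) dt. Then ⟨X_g⟩ = X_{⟨g⟩}. In particular, if g is S¹-invariant then X_g is S¹-invariant. -/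
open Real

/-!
The flow of a Hamiltonian vector field `X_H` preserves the symplectic form. Differentiating
`φ_{T(x)}(x) = x` with `T = 2π/ω` gives `Dφ_T = id - dT ⊗ X_H`, and such a map is symplectic only if
`dT ∧ dH = 0` (the period–energy relation). Hence `Υ = ω⁻¹ X_H` is infinitesimally symplectic too,
its flow `ψ` satisfies `ψ_t^* X_g = X_{g ∘ ψ_t}`, and integrating over `t` averages both sides.

Differentiability of a flow in the initial point comes from Hadamard's lemma: writing
`X b - X a = A(a, b) (b - a)` with `A` of class `C¹`, the separation `ψ_t z - ψ_t y` solves a linear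
equation, so it equals `M(t, y, z) (z - y)`, where `M` is continuous by Picard–Lindelöf. The
derivative of `ψ_t` at `y` is then `M(t, y, y)`.
-/

open Set Filter Topology Metric Function ContinuousLinearMap

section ParametricIntegral

variable {E F : Type*} [NormedAddCommGroup E] [NormedSpace ℝ E]
  [NormedAddCommGroup F] [NormedSpace ℝ F] {f : ℝ → E → F}

theorem contDiff_apply_of_contDiff_uncurry {n : WithTop ℕ∞} (hf : ContDiff ℝ n ↿f) (t : ℝ) :
    ContDiff ℝ n (f t) :=
  hf.comp (contDiff_prodMk_right t)

theorem continuous_fderiv_uncurry (hf : ContDiff ℝ 1 ↿f) :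
    Continuous fun p : ℝ × E => fderiv ℝ (f p.1) p.2 := by
  have hf' : ContDiff ℝ 1 (uncurry fun (p : ℝ × E) (y : E) => f p.1 y) :=
    hf.comp (f := fun q : (ℝ × E) × E => (q.1.1, q.2)) (by fun_prop)
  exact (hf'.fderiv (n := 0) contDiff_snd (by simp)).continuous

theorem hasFDerivAt_intervalIntegral_of_contDiff (hf : ContDiff ℝ 1 ↿f) (a b : ℝ) (x : E) :
    HasFDerivAt (fun y => ∫ t in a..b, f t y) (∫ t in a..b, fderiv ℝ (f t) x) x := by
  have hf' := continuous_fderiv_uncurry hf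
  have hc : ∀ y, Continuous fun t => f t y := fun y => hf.continuous.comp (.prodMk_left y)
  obtain ⟨C, hC⟩ := isCompact_uIcc.exists_bound_of_continuousOn (s := uIcc a b)
    (hf'.comp (.prodMk_left x)).continuousOn
  have hbound : ∀ᶠ y in 𝓝 x, ∀ t ∈ uIcc a b, ‖fderiv ℝ (f t) y‖ < C + 1 :=
    isCompact_uIcc.eventually_forall_of_forall_eventually fun t ht =>
      (hf'.comp continuous_swap).norm.continuousAt.eventually_lt continuousAt_const
        ((hC t ht).trans_lt (lt_add_one C))
  refine intervalIntegral.hasFDerivAt_integral_of_dominated_of_fderiv_le hbound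
    (.of_forall fun y => (hc y).aestronglyMeasurable) ((hc x).intervalIntegrable a b)
    (hf'.comp (.prodMk_left x)).aestronglyMeasurable
    (.of_forall fun t ht y hy => (hy t (uIoc_subset_uIcc ht)).le)
    (intervalIntegrable_const (c := C + 1)) (.of_forall fun t _ y _ => ?_)
  exact ((contDiff_apply_of_contDiff_uncurry hf t).differentiable one_ne_zero y).hasFDerivAt

theorem contDiff_one_intervalIntegral (hf : ContDiff ℝ 1 ↿f) (a b : ℝ) :
    ContDiff ℝ 1 fun y => ∫ t in a..b, f t y :=
  contDiff_one_iff_hasFDerivAt.2 ⟨_,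
    intervalIntegral.continuous_parametric_intervalIntegral_of_continuous'
      (f := fun y t => fderiv ℝ (f t) y) ((continuous_fderiv_uncurry hf).comp continuous_swap) a b,
    hasFDerivAt_intervalIntegral_of_contDiff hf a b⟩

end ParametricIntegral

section MeanFDeriv

variable {E F : Type*} [NormedAddCommGroup E] [NormedSpace ℝ E]
  [NormedAddCommGroup F] [NormedSpace ℝ F]

/-- The mean `∫₀¹ DX(a + s (b - a)) ds` of the derivative of `X` over the segment from `a` to `b`,
as a function of `(a, b)`. It is the difference quotient of Hadamard's lemma, linearising the
increment of `X` exactly. -/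
noncomputable def meanFDeriv (X : E → F) (p : E × E) : E →L[ℝ] F :=
  ∫ s in (0 : ℝ)..1, fderiv ℝ X (p.1 + s • (p.2 - p.1))

theorem contDiff_one_meanFDeriv {X : E → F} (hX : ContDiff ℝ 2 X) :
    ContDiff ℝ 1 (meanFDeriv X) := by
  have hX' : ContDiff ℝ 1 (fderiv ℝ X) := hX.fderiv_right (by norm_num)
  refine contDiff_one_intervalIntegral
    (f := fun s (p : E × E) => fderiv ℝ X (p.1 + s • (p.2 - p.1))) ?_ 0 1
  exact hX'.comp (f := fun q : ℝ × E × E => q.2.1 + q.1 • (q.2.2 - q.2.1)) (by fun_prop)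

theorem meanFDeriv_apply_sub [CompleteSpace F] {X : E → F} (hX : ContDiff ℝ 1 X) (a b : E) :
    meanFDeriv X (a, b) (b - a) = X b - X a := by
  have hline : ∀ s : ℝ, HasDerivAt (fun s : ℝ => a + s • (b - a)) (b - a) s := fun s => by
    simpa using ((hasDerivAt_id s).smul_const (b - a)).const_add a
  have hcont : Continuous fun s : ℝ => fderiv ℝ X (a + s • (b - a)) :=
    (hX.continuous_fderiv one_ne_zero).comp (by fun_prop)
  rw [meanFDeriv, intervalIntegral_apply (hcont.intervalIntegrable 0 1),
    intervalIntegral.integral_eq_sub_of_hasDerivAt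
      (f := fun s : ℝ => X (a + s • (b - a)))
      (fun s _ => (hX.differentiable one_ne_zero _).hasFDerivAt.comp_hasDerivAt s (hline s))
      ((hcont.clm_apply continuous_const).intervalIntegrable 0 1)]
  simp

end MeanFDeriv

section Differentiability

variable {E F : Type*} [NormedAddCommGroup E] [NormedSpace ℝ E]
  [NormedAddCommGroup F] [NormedSpace ℝ F]

theorem hasFDerivAt_of_sub_eq_apply {f : E → F} {A : E → E →L[ℝ] F} {y : E}
    (hA : ContinuousAt A y) (h : ∀ᶠ z in 𝓝 y, f z - f y = A z (z - y)) :
    HasFDerivAt f (A y) y := by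
  have hsmall : (fun z => ‖A z - A y‖ * ‖z - y‖) =o[𝓝 y] fun z => z - y := by
    have h0 : Tendsto (fun z => ‖A z - A y‖) (𝓝 y) (𝓝 0) :=
      tendsto_iff_norm_sub_tendsto_zero.1 hA
    simpa using ((Asymptotics.isLittleO_one_iff ℝ).2 h0).mul_isBigO
      (Asymptotics.isBigO_refl (fun z => ‖z - y‖) (𝓝 y)) |>.norm_right
  rw [hasFDerivAt_iff_isLittleO]
  refine Asymptotics.IsBigO.trans_isLittleO (.of_bound 1 ?_) hsmall
  filter_upwards [h] with z hz
  rw [hz, ← sub_apply, one_mul, norm_mul, norm_norm, norm_norm]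
  exact le_opNorm _ _

theorem continuousAt_uncurry_of_sub_eq_apply {T : Type*} [TopologicalSpace T] {f : T → E → F}
    {M : T × E × E → E →L[ℝ] F} {t : T} {y : E} (hf : ContinuousAt (f · y) t)
    (hM : ContinuousAt M (t, y, y))
    (h : ∀ᶠ p in 𝓝 (t, y, y), f p.1 p.2.2 - f p.1 p.2.1 = M p (p.2.2 - p.2.1)) :
    ContinuousAt ↿f (t, y) := by
  have hι : ContinuousAt (fun q : T × E => (q.1, y, q.2)) (t, y) := by fun_prop
  have hcont : ContinuousAt (fun q : T × E => f q.1 y + M (q.1, y, q.2) (q.2 - y)) (t, y) :=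
    (hf.comp (f := Prod.fst) (x := (t, y)) continuousAt_fst).add
      ((hM.comp (x := (t, y)) hι).clm_apply (by fun_prop))
  refine hcont.congr ?_
  filter_upwards [hι.eventually h] with q hq
  exact (eq_add_of_sub_eq' hq).symm

end Differentiability

section Flow

theorem eqOn_Icc_of_hasDerivAt_of_contDiff {E : Type*} [NormedAddCommGroup E] [NormedSpace ℝ E]
    {X : E → E} (hX : ContDiff ℝ 1 X) {f g : ℝ → E} {a b t₀ : ℝ} (ht₀ : t₀ ∈ Ioo a b)
    (hf : ContinuousOn f (Icc a b)) (hf' : ∀ t ∈ Ioo a b, HasDerivAt f (X (f t)) t)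
    (hg : ContinuousOn g (Icc a b)) (hg' : ∀ t ∈ Ioo a b, HasDerivAt g (X (g t)) t)
    (h : f t₀ = g t₀) : EqOn f g (Icc a b) := by
  have hcompact : IsCompact (f '' Icc a b ∪ g '' Icc a b) :=
    (isCompact_Icc.image_of_continuousOn hf).union (isCompact_Icc.image_of_continuousOn hg)
  obtain ⟨K, hK⟩ :=
    hX.locallyLipschitz.locallyLipschitzOn.exists_lipschitzOnWith_of_compact hcompact
  exact ODE_solution_unique_of_mem_Icc (v := fun _ => X) (fun _ _ => hK) ht₀
    hf hf' (fun t ht => .inl (mem_image_of_mem f (Ioo_subset_Icc_self ht)))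
    hg hg' (fun t ht => .inr (mem_image_of_mem g (Ioo_subset_Icc_self ht))) h

/-- `ψ` is a complete flow, i.e. a one-parameter group, whose orbits are the integral curves of
the vector field `X`. -/
structure IsFlowOf {E : Type*} [NormedAddCommGroup E] [NormedSpace ℝ E] (X : E → E)
    (ψ : ℝ → E → E) : Prop where
  map_zero : ∀ x, ψ 0 x = x
  map_add : ∀ s t x, ψ (s + t) x = ψ s (ψ t x)
  hasDerivAt : ∀ t x, HasDerivAt (fun τ => ψ τ x) (X (ψ t x)) t

/-- The system `a' = X a`, `b' = X b`, `T' = meanFDeriv X (a, b) ∘ T`, whose last component carries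
initial separations `b - a` to separations at later times. -/
noncomputable def separationField {E : Type*} [NormedAddCommGroup E] [NormedSpace ℝ E] (X : E → E)
    (p : E × E × (E →L[ℝ] E)) : E × E × (E →L[ℝ] E) :=
  (X p.1, X p.2.1, (meanFDeriv X (p.1, p.2.1)).comp p.2.2)

theorem contDiff_one_separationField {E : Type*} [NormedAddCommGroup E] [NormedSpace ℝ E]
    {X : E → E} (hX : ContDiff ℝ 2 X) : ContDiff ℝ 1 (separationField X) := by
  have hX1 : ContDiff ℝ 1 X := hX.of_le one_le_two
  exact (hX1.comp contDiff_fst).prodMk ((hX1.comp (contDiff_fst.comp contDiff_snd)).prodMk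
    (((contDiff_one_meanFDeriv hX).comp
      (f := fun p : E × E × (E →L[ℝ] E) => (p.1, p.2.1)) (by fun_prop)).clm_comp (by fun_prop)))

namespace IsFlowOf

variable {E : Type*} [NormedAddCommGroup E] [NormedSpace ℝ E] {X : E → E} {ψ : ℝ → E → E}

theorem map_neg_map (h : IsFlowOf X ψ) (t : ℝ) (x : E) : ψ (-t) (ψ t x) = x := by
  rw [← h.map_add, neg_add_cancel, h.map_zero]

theorem continuous_orbit (h : IsFlowOf X ψ) (x : E) : Continuous fun t => ψ t x :=
  continuous_iff_continuousAt.2 fun t => (h.hasDerivAt t x).continuousAt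

variable [CompleteSpace E]

theorem sub_eq_apply_of_hasDerivAt_separationField (h : IsFlowOf X ψ) (hX : ContDiff ℝ 2 X)
    {γ : ℝ → E × E × (E →L[ℝ] E)} {ε : ℝ} (hε : 0 < ε) (hγ : ContinuousOn γ (Icc (-ε) ε))
    (hγ' : ∀ t ∈ Ioo (-ε) ε, HasDerivAt γ (separationField X (γ t)) t) {y z : E}
    (hγ0 : γ 0 = (y, z, .id ℝ E)) {t : ℝ} (ht : t ∈ Icc (-ε) ε) :
    ψ t z - ψ t y = (γ t).2.2 (z - y) := by
  have hX1 : ContDiff ℝ 1 X := hX.of_le one_le_two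
  -- Both `(a, b, T (z - y))` and `(ψ t y, ψ t z, ψ t z - ψ t y)` are integral curves of `Z`.
  let Z : E × E × E → E × E × E := fun p => (X p.1, X p.2.1, meanFDeriv X (p.1, p.2.1) p.2.2)
  have hZ : ContDiff ℝ 1 Z :=
    (hX1.comp contDiff_fst).prodMk ((hX1.comp (contDiff_fst.comp contDiff_snd)).prodMk
      (((contDiff_one_meanFDeriv hX).comp (f := fun p : E × E × E => (p.1, p.2.1))
        (by fun_prop)).clm_apply (by fun_prop)))
  let L : E × E × (E →L[ℝ] E) →L[ℝ] E × E × E :=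
    .prodMap (.id ℝ E) (.prodMap (.id ℝ E) (apply ℝ E (z - y)))
  have hflow : ∀ t, HasDerivAt (fun t => (ψ t y, ψ t z, ψ t z - ψ t y))
      (Z (ψ t y, ψ t z, ψ t z - ψ t y)) t := fun t => by
    simp only [Z, meanFDeriv_apply_sub hX1]
    exact (h.hasDerivAt t y).prodMk
      ((h.hasDerivAt t z).prodMk ((h.hasDerivAt t z).sub (h.hasDerivAt t y)))
  have heq := eqOn_Icc_of_hasDerivAt_of_contDiff hZ (f := L ∘ γ) (t₀ := 0) ⟨by linarith, hε⟩
    (L.continuous.comp_continuousOn hγ)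
    (fun s hs => L.hasFDerivAt.comp_hasDerivAt s (hγ' s hs))
    (fun s _ => (hflow s).continuousAt.continuousWithinAt) (fun s _ => hflow s)
    (by simp [L, hγ0, h.map_zero]) ht
  exact (congrArg (fun p => p.2.2) heq).symm

theorem exists_continuousAt_sub_eq_apply (h : IsFlowOf X ψ) (hX : ContDiff ℝ 2 X) (x : E) :
    ∃ M : ℝ × E × E → E →L[ℝ] E, ∀ᶠ p in 𝓝 (0, x, x),
      ContinuousAt M p ∧ ψ p.1 p.2.2 - ψ p.1 p.2.1 = M p (p.2.2 - p.2.1) := by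
  obtain ⟨ε, hε, a, r, L, K, hr, hpl⟩ :=
    IsPicardLindelof.of_contDiffAt_one
      ((contDiff_one_separationField hX).contDiffAt (x := (x, x, .id ℝ E)))
  obtain ⟨α, hα, hαc⟩ :=
    (hpl 0).exists_forall_mem_closedBall_eq_hasDerivWithinAt_continuousOn
  simp only [zero_sub, zero_add] at hα hαc
  let c : ℝ × E × E → (E × E × (E →L[ℝ] E)) × ℝ := fun p => ((p.2.1, p.2.2, .id ℝ E), p.1)
  have hc : Continuous c := by fun_prop
  have hU : ∀ᶠ p in 𝓝 ((0 : ℝ), x, x), c p ∈ ball (x, x, .id ℝ E) r ×ˢ Ioo (-ε) ε :=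
    hc.continuousAt.eventually
      ((isOpen_ball.prod isOpen_Ioo).mem_nhds ⟨mem_ball_self hr, by simpa [c] using hε⟩)
  refine ⟨fun p => (α (c p)).2.2, hU.mono fun p hp => ⟨?_, ?_⟩⟩
  · have hαp : ContinuousAt α (c p) := hαc.continuousAt <| mem_of_superset
      ((isOpen_ball.prod isOpen_Ioo).mem_nhds hp)
      (prod_mono ball_subset_closedBall Ioo_subset_Icc_self)
    exact (continuous_snd.comp continuous_snd).continuousAt.comp (hαp.comp hc.continuousAt)
  · obtain ⟨hα0, hα'⟩ := hα _ (ball_subset_closedBall hp.1)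
    exact h.sub_eq_apply_of_hasDerivAt_separationField hX hε
      (fun t ht => (hα' t ht).continuousWithinAt)
      (fun t ht => (hα' t (Ioo_subset_Icc_self ht)).hasDerivAt (Icc_mem_nhds ht.1 ht.2))
      hα0 (Ioo_subset_Icc_self hp.2)

theorem contDiffAt_uncurry_zero (h : IsFlowOf X ψ) (hX : ContDiff ℝ 2 X) (x : E) :
    ContDiffAt ℝ 1 ↿ψ (0, x) := by
  obtain ⟨M, hM⟩ := h.exists_continuousAt_sub_eq_apply hX x
  let δ : ℝ × E → ℝ × E × E := fun p => (p.1, p.2, p.2)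
  have hδ : Continuous δ := by fun_prop
  have hMδ : ∀ᶠ p in 𝓝 (0, x), ∀ᶠ p' in 𝓝 p, ∀ᶠ q in 𝓝 (δ p'),
      ContinuousAt M q ∧ ψ q.1 q.2.2 - ψ q.1 q.2.1 = M q (q.2.2 - q.2.1) :=
    eventually_eventually_nhds.2 (hδ.continuousAt.eventually (eventually_eventually_nhds.2 hM))
  have hMc : ∀ᶠ p in 𝓝 ((0 : ℝ), x), ContinuousAt (fun q => M (δ q)) p :=
    hMδ.mono fun p hp => hp.self_of_nhds.self_of_nhds.1.comp' hδ.continuousAt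
  have hψc : ∀ᶠ p in 𝓝 ((0 : ℝ), x), ContinuousAt ↿ψ p := hMδ.mono fun p hp =>
    continuousAt_uncurry_of_sub_eq_apply (h.continuous_orbit p.2).continuousAt
      hp.self_of_nhds.self_of_nhds.1 (hp.self_of_nhds.mono fun _ hq => hq.2)
  have hψ' : ∀ᶠ p in 𝓝 ((0 : ℝ), x), ∀ᶠ q in 𝓝 p, HasFDerivAt (ψ q.1) (M (δ q)) q.2 := by
    refine hMδ.mono fun p hp => hp.mono fun q hq => ?_
    have hι : ContinuousAt (fun z => (q.1, q.2, z)) q.2 := by fun_prop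
    exact hasFDerivAt_of_sub_eq_apply (A := fun z => M (q.1, q.2, z))
      (hq.self_of_nhds.1.comp (x := q.2) hι) ((hι.eventually hq).mono fun _ hz => hz.2)
  have hXψ : ∀ {p}, ContinuousAt ↿ψ p →
      ContinuousAt (fun q : ℝ × E => toSpanSingleton ℝ (X (ψ q.1 q.2))) p := fun hp =>
    (toSpanSingletonCLE (𝕜 := ℝ) (E := E)).continuous.continuousAt.comp
      (hX.continuous.continuousAt.comp hp)
  refine contDiffAt_one_iff.2 ⟨fun p => (toSpanSingleton ℝ (X (ψ p.1 p.2))).coprod (M (δ p)),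
    _, (hMc.and (hψc.and hψ')), fun p hp => ?_, fun p hp => ?_⟩
  · exact (hXψ hp.2.1).continuousWithinAt.continuousLinearMapCoprod hp.1.continuousWithinAt
  · exact (hasStrictFDerivAt_uncurry_coprod
      (f₁ := fun t y => toSpanSingleton ℝ (X (ψ t y))) (f₂ := fun t y => M (t, y, y))
      (.of_forall fun q => (h.hasDerivAt q.1 q.2).hasFDerivAt) hp.2.2
      (hXψ hp.2.1) hp.1).hasFDerivAt

theorem contDiff_one (h : IsFlowOf X ψ) (hX : ContDiff ℝ 2 X) : ContDiff ℝ 1 ↿ψ := by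
  rw [contDiff_iff_contDiffAt]
  rintro ⟨t, x⟩
  let S : Set ℝ := {t | ContDiffAt ℝ 1 ↿ψ (t, x)}
  have hopen : IsOpen S := isOpen_iff_mem_nhds.2 fun t ht =>
    (Continuous.prodMk_left x).continuousAt.eventually (ContDiffAt.eventually ht (by simp))
  -- Near `(t, x)`, `ψ` is the time-`s` flow for some `s ∈ S` followed by a short-time flow.
  have hclosed : IsClosed S := by
    refine isClosed_of_closure_subset fun t ht => ?_
    have hnear : ∀ᶠ s in 𝓝 t, ContDiffAt ℝ 1 ↿ψ (t - s, ψ s x) := by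
      have hc : ContinuousAt (fun s => (t - s, ψ s x)) t :=
        (continuousAt_const.sub continuousAt_id).prodMk (h.continuous_orbit x).continuousAt
      refine hc.eventually ?_
      simpa using (h.contDiffAt_uncurry_zero hX (ψ t x)).eventually (by simp)
    obtain ⟨s, hsS, hs⟩ := ((mem_closure_iff_frequently.1 ht).and_eventually hnear).exists
    have hψs : ContDiffAt ℝ 1 (fun p : ℝ × E => ψ s p.2) (t, x) :=
      ContDiffAt.comp (t, x) (g := ↿ψ) (f := fun p : ℝ × E => (s, p.2)) hsS (by fun_prop)
    have hcomp : ContDiffAt ℝ 1 (fun p : ℝ × E => ψ (p.1 - s) (ψ s p.2)) (t, x) :=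
      ContDiffAt.comp (t, x) (g := ↿ψ) (f := fun p : ℝ × E => (p.1 - s, ψ s p.2)) hs
        ((contDiffAt_fst.sub contDiffAt_const).prodMk hψs)
    refine hcomp.congr_of_eventuallyEq (.of_forall fun p => ?_)
    simp [HasUncurry.uncurry, ← h.map_add]
  have huniv : S = univ :=
    IsClopen.eq_univ ⟨hclosed, hopen⟩ ⟨0, h.contDiffAt_uncurry_zero hX x⟩
  exact (huniv ▸ mem_univ t : t ∈ S)

theorem differentiable (h : IsFlowOf X ψ) (hX : ContDiff ℝ 2 X) (t : ℝ) :
    Differentiable ℝ (ψ t) :=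
  (contDiff_apply_of_contDiff_uncurry (h.contDiff_one hX) t).differentiable one_ne_zero

theorem hasFDerivAt_uncurry (h : IsFlowOf X ψ) (hX : ContDiff ℝ 2 X) (t : ℝ) (x : E) :
    HasFDerivAt ↿ψ ((toSpanSingleton ℝ (X (ψ t x))).coprod (fderiv ℝ (ψ t) x)) (t, x) :=
  (hasStrictFDerivAt_uncurry_coprod (u := (t, x))
    (f₁ := fun t x => toSpanSingleton ℝ (X (ψ t x))) (f₂ := fun t x => fderiv ℝ (ψ t) x)
    (.of_forall fun p => (h.hasDerivAt p.1 p.2).hasFDerivAt)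
    (.of_forall fun p => (h.differentiable hX p.1 p.2).hasFDerivAt)
    ((toSpanSingletonCLE (𝕜 := ℝ) (E := E)).continuous.comp
      (hX.continuous.comp (h.contDiff_one hX).continuous)).continuousAt
    (continuous_fderiv_uncurry (h.contDiff_one hX)).continuousAt).hasFDerivAt

theorem fderiv_period_apply (h : IsFlowOf X ψ) (hX : ContDiff ℝ 2 X) {T : E → ℝ} {x : E}
    (hT : DifferentiableAt ℝ T x) (hper : ∀ᶠ y in 𝓝 x, ψ (T y) y = y) (v : E) :
    fderiv ℝ (ψ (T x)) x v = v - fderiv ℝ T x v • X x := by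
  have hcomp : HasFDerivAt (fun y => ψ (T y) y) _ x :=
    (h.hasFDerivAt_uncurry hX (T x) x).comp (f := fun y => (T y, y)) x
      (hT.hasFDerivAt.prodMk (hasFDerivAt_id x))
  have hid := (hcomp.congr_of_eventuallyEq (hper.mono fun _ hy => hy.symm)).unique
    (hasFDerivAt_id x)
  refine eq_sub_of_add_eq' ?_
  simpa [hper.self_of_nhds] using DFunLike.congr_fun hid v

theorem eq_add_integral (h : IsFlowOf X ψ) (hX : Continuous X) (t : ℝ) (x : E) :
    ψ t x = x + ∫ s in (0 : ℝ)..t, X (ψ s x) := by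
  rw [intervalIntegral.integral_eq_sub_of_hasDerivAt (fun s _ => h.hasDerivAt s x)
    ((hX.comp (h.continuous_orbit x)).intervalIntegrable 0 t), h.map_zero, add_sub_cancel]

theorem hasDerivAt_fderiv (h : IsFlowOf X ψ) (hX : ContDiff ℝ 2 X) (t : ℝ) (x : E) :
    HasDerivAt (fun τ => fderiv ℝ (ψ τ) x)
      ((fderiv ℝ X (ψ t x)).comp (fderiv ℝ (ψ t) x)) t := by
  have hXψ : ContDiff ℝ 1 ↿(fun s y => X (ψ s y)) :=
    (hX.of_le one_le_two).comp (h.contDiff_one hX)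
  have hcont : Continuous fun s => fderiv ℝ (fun y => X (ψ s y)) x :=
    (continuous_fderiv_uncurry hXψ).comp (.prodMk_left x)
  have hint : ∀ τ, fderiv ℝ (ψ τ) x =
      .id ℝ E + ∫ s in (0 : ℝ)..τ, fderiv ℝ (fun y => X (ψ s y)) x := fun τ => by
    rw [funext (h.eq_add_integral hX.continuous τ)]
    exact ((hasFDerivAt_id x).add (hasFDerivAt_intervalIntegral_of_contDiff hXψ 0 τ x)).fderiv
  rw [funext hint, ← fderiv_fun_comp x (hX.differentiable two_ne_zero _) (h.differentiable hX t x)]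
  exact (intervalIntegral.integral_hasDerivAt_right (hcont.intervalIntegrable 0 t)
    hcont.aestronglyMeasurable.stronglyMeasurableAtFilter hcont.continuousAt).const_add _

theorem apply_fderiv_fderiv {F : Type*} [NormedAddCommGroup F] [NormedSpace ℝ F]
    (h : IsFlowOf X ψ) (hX : ContDiff ℝ 2 X) {B : E →L[ℝ] E →L[ℝ] F}
    (hB : ∀ z a b, B (fderiv ℝ X z a) b + B a (fderiv ℝ X z b) = 0) (t : ℝ) (x u v : E) :
    B (fderiv ℝ (ψ t) x u) (fderiv ℝ (ψ t) x v) = B u v := by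
  have happly : ∀ t w, HasDerivAt (fun τ => fderiv ℝ (ψ τ) x w)
      (fderiv ℝ X (ψ t x) (fderiv ℝ (ψ t) x w)) t := fun t w => by
    simpa using (h.hasDerivAt_fderiv hX t x).clm_apply (hasDerivAt_const t w)
  have hderiv : ∀ t, HasDerivAt
      (fun τ => B (fderiv ℝ (ψ τ) x u) (fderiv ℝ (ψ τ) x v)) 0 t := fun t => by
    simpa [hB] using (B.hasFDerivAt.comp_hasDerivAt t (happly t u)).clm_apply (happly t v)
  have hconst := is_const_of_deriv_eq_zero (fun t => (hderiv t).differentiableAt)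
    (fun t => (hderiv t).deriv) t 0
  simpa [show ψ 0 = id from funext h.map_zero] using hconst

theorem fderiv_apply_fderiv_neg (h : IsFlowOf X ψ) (hX : ContDiff ℝ 2 X) (t : ℝ) (x v : E) :
    fderiv ℝ (ψ t) x (fderiv ℝ (ψ (-t)) (ψ t x) v) = v := by
  have hcomp : HasFDerivAt (fun y => ψ t (ψ (-t) y)) _ (ψ t x) :=
    (h.differentiable hX t _).hasFDerivAt.comp _ (h.differentiable hX (-t) (ψ t x)).hasFDerivAt
  have hid : (fun y => ψ t (ψ (-t) y)) = id := funext fun y => by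
    simpa using h.map_neg_map (-t) y
  rw [hid, h.map_neg_map] at hcomp
  exact DFunLike.congr_fun (hcomp.unique (hasFDerivAt_id _)) v

end IsFlowOf

end Flow

section Symplectic

variable {E : Type*} [NormedAddCommGroup E] [NormedSpace ℝ E] {Ω : E ≃L[ℝ] (E →L[ℝ] ℝ)}

/-- The Hamiltonian vector field of `f` for a linear symplectic form on a Banach space, encoded as
an isomorphism `Ω` of `E` onto its dual with `Ω v v = 0`; it is given by `Ω (X_f) = df`. -/
noncomputable def hamiltonianVectorField (Ω : E ≃L[ℝ] (E →L[ℝ] ℝ)) (f : E → ℝ) (x : E) : E :=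
  Ω.symm (fderiv ℝ f x)

theorem apply_hamiltonianVectorField (f : E → ℝ) (x : E) :
    Ω (hamiltonianVectorField Ω f x) = fderiv ℝ f x :=
  Ω.apply_symm_apply _

theorem contDiff_hamiltonianVectorField {m n : WithTop ℕ∞} {f : E → ℝ} (hf : ContDiff ℝ n f)
    (hmn : m + 1 ≤ n) : ContDiff ℝ m (hamiltonianVectorField Ω f) :=
  Ω.symm.contDiff.comp (hf.fderiv_right hmn)

theorem hamiltonianVectorField_const_mul {f : E → ℝ} {x : E} (hf : DifferentiableAt ℝ f x)
    (c : ℝ) : hamiltonianVectorField Ω (fun y => c * f y) x = c • hamiltonianVectorField Ω f x := by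
  simp [hamiltonianVectorField, fderiv_const_mul hf]

theorem apply_eq_neg_apply_of_apply_self (hΩ : ∀ v, Ω v v = 0) (v w : E) : Ω v w = -Ω w v := by
  have := hΩ (v + w)
  simp only [map_add, add_apply, hΩ] at this
  linarith

theorem apply_fderiv_smul_hamiltonianVectorField (hΩ : ∀ v, Ω v v = 0) {c H : E → ℝ} {z : E}
    (hc : DifferentiableAt ℝ c z) (hH : ContDiffAt ℝ 2 H z)
    (hwedge : ∀ a b, fderiv ℝ c z a * fderiv ℝ H z b = fderiv ℝ c z b * fderiv ℝ H z a) (a b : E) :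
    Ω (fderiv ℝ (fun y => c y • hamiltonianVectorField Ω H y) z a) b +
      Ω a (fderiv ℝ (fun y => c y • hamiltonianVectorField Ω H y) z b) = 0 := by
  have hdH : DifferentiableAt ℝ (fderiv ℝ H) z :=
    (hH.fderiv_right (m := 1) (by norm_num)).differentiableAt one_ne_zero
  have happly : ∀ a b, Ω (fderiv ℝ (fun y => c y • hamiltonianVectorField Ω H y) z a) b =
      c z * fderiv ℝ (fderiv ℝ H) z a b + fderiv ℝ c z a * fderiv ℝ H z b := fun a b => by
    have hcomp : Ω ∘ (fun y => c y • hamiltonianVectorField Ω H y) = fun y => c y • fderiv ℝ H y :=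
      funext fun y => by simp [apply_hamiltonianVectorField]
    have hderiv := Ω.comp_fderiv (f := fun y => c y • hamiltonianVectorField Ω H y) (x := z)
    rw [hcomp, fderiv_fun_smul hc hdH] at hderiv
    simpa using (DFunLike.congr_fun (DFunLike.congr_fun hderiv a) b).symm
  have hsymm : fderiv ℝ (fderiv ℝ H) z a b = fderiv ℝ (fderiv ℝ H) z b a :=
    hH.isSymmSndFDerivAt (by simp) a b
  rw [apply_eq_neg_apply_of_apply_self hΩ a, happly, happly, hsymm, hwedge a b]
  ring

variable [CompleteSpace E]

theorem hamiltonianVectorField_intervalIntegral {f : ℝ → E → ℝ} (hf : ContDiff ℝ 1 ↿f) (a b : ℝ)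
    (x : E) : hamiltonianVectorField Ω (fun y => ∫ t in a..b, f t y) x =
      ∫ t in a..b, hamiltonianVectorField Ω (f t) x := by
  have hcont : Continuous fun t => fderiv ℝ (f t) x :=
    (continuous_fderiv_uncurry hf).comp (.prodMk_left x)
  simp only [hamiltonianVectorField, (hasFDerivAt_intervalIntegral_of_contDiff hf a b x).fderiv]
  exact (Ω.symm.toContinuousLinearMap.intervalIntegral_comp_comm
    (hcont.intervalIntegrable a b)).symm

theorem fderiv_period_mul_fderiv_comm (hΩ : ∀ v, Ω v v = 0) {H T : E → ℝ} (hH : ContDiff ℝ 3 H)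
    {φ : ℝ → E → E} (hφ : IsFlowOf (hamiltonianVectorField Ω H) φ) {x : E}
    (hT : DifferentiableAt ℝ T x) (hper : ∀ᶠ y in 𝓝 x, φ (T y) y = y) (v w : E) :
    fderiv ℝ T x v * fderiv ℝ H x w = fderiv ℝ T x w * fderiv ℝ H x v := by
  have hX : ContDiff ℝ 2 (hamiltonianVectorField Ω H) :=
    contDiff_hamiltonianVectorField hH (by norm_num)
  have hsymp := hφ.apply_fderiv_fderiv hX (B := Ω.toContinuousLinearMap) (fun z a b => by
    simpa using apply_fderiv_smul_hamiltonianVectorField hΩ (differentiableAt_const (1 : ℝ))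
      (hH.contDiffAt.of_le (by norm_num)) (by simp) a b) (T x) x v w
  rw [hφ.fderiv_period_apply hX hT hper, hφ.fderiv_period_apply hX hT hper] at hsymp
  have hv : Ω v (hamiltonianVectorField Ω H x) = -fderiv ℝ H x v := by
    rw [apply_eq_neg_apply_of_apply_self hΩ, apply_hamiltonianVectorField]
  have hconserved : fderiv ℝ H x (hamiltonianVectorField Ω H x) = 0 := by
    rw [← apply_hamiltonianVectorField (Ω := Ω), hΩ]
  simp only [ContinuousLinearEquiv.coe_coe, map_sub, map_smul, sub_apply, smul_apply, smul_eq_mul,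
    hv, hconserved, apply_hamiltonianVectorField] at hsymp
  linarith

theorem IsFlowOf.fderiv_neg_hamiltonianVectorField {X : E → E} {ψ : ℝ → E → E}
    (h : IsFlowOf X ψ) (hX : ContDiff ℝ 2 X)
    (hΩX : ∀ z a b, Ω (fderiv ℝ X z a) b + Ω a (fderiv ℝ X z b) = 0) {g : E → ℝ}
    (hg : Differentiable ℝ g) (t : ℝ) (x : E) :
    fderiv ℝ (ψ (-t)) (ψ t x) (hamiltonianVectorField Ω g (ψ t x)) =
      hamiltonianVectorField Ω (fun y => g (ψ t y)) x := by
  refine Ω.injective (ContinuousLinearMap.ext fun b => ?_)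
  calc Ω (fderiv ℝ (ψ (-t)) (ψ t x) (hamiltonianVectorField Ω g (ψ t x))) b
      = Ω (hamiltonianVectorField Ω g (ψ t x)) (fderiv ℝ (ψ t) x b) := by
        have := h.apply_fderiv_fderiv hX (B := Ω.toContinuousLinearMap) hΩX t x
          (fderiv ℝ (ψ (-t)) (ψ t x) (hamiltonianVectorField Ω g (ψ t x))) b
        rw [h.fderiv_apply_fderiv_neg hX] at this
        exact this.symm
    _ = Ω (hamiltonianVectorField Ω (fun y => g (ψ t y)) x) b := by
        rw [apply_hamiltonianVectorField, apply_hamiltonianVectorField,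
          fderiv_fun_comp x (hg _) (h.differentiable hX t x),
          ContinuousLinearMap.comp_apply]

theorem IsFlowOf.smul_intervalIntegral_fderiv_neg_hamiltonianVectorField {X : E → E}
    {ψ : ℝ → E → E} (h : IsFlowOf X ψ) (hX : ContDiff ℝ 2 X)
    (hΩX : ∀ z a b, Ω (fderiv ℝ X z a) b + Ω a (fderiv ℝ X z b) = 0) {g : E → ℝ}
    (hg : ContDiff ℝ 1 g) (c a b : ℝ) (x : E) :
    c • ∫ t in a..b, fderiv ℝ (ψ (-t)) (ψ t x) (hamiltonianVectorField Ω g (ψ t x)) =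
      hamiltonianVectorField Ω (fun y => c * ∫ t in a..b, g (ψ t y)) x := by
  have hgψ : ContDiff ℝ 1 ↿(fun t y => g (ψ t y)) := hg.comp (h.contDiff_one hX)
  rw [hamiltonianVectorField_const_mul
      (hasFDerivAt_intervalIntegral_of_contDiff hgψ a b x).differentiableAt,
    hamiltonianVectorField_intervalIntegral hgψ]
  simp only [h.fderiv_neg_hamiltonianVectorField hX hΩX (hg.differentiable one_ne_zero)]

theorem fderiv_inv_mul_fderiv_comm (hΩ : ∀ v, Ω v v = 0) {H ω : E → ℝ} (hH : ContDiff ℝ 3 H)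
    (hω : Differentiable ℝ ω) (hω0 : ∀ x, ω x ≠ 0) {φ : ℝ → E → E}
    (hφ : IsFlowOf (hamiltonianVectorField Ω H) φ) (hper : ∀ x, φ (2 * π / ω x) x = x)
    (x v w : E) :
    fderiv ℝ (fun y => (ω y)⁻¹) x v * fderiv ℝ H x w =
      fderiv ℝ (fun y => (ω y)⁻¹) x w * fderiv ℝ H x v := by
  have hinv : DifferentiableAt ℝ (fun y => (ω y)⁻¹) x := (hω x).inv (hω0 x)
  have h := fderiv_period_mul_fderiv_comm hΩ hH hφ (hinv.const_mul (2 * π))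
    (.of_forall fun y => by simpa [div_eq_mul_inv] using hper y) v w
  rw [fderiv_const_mul hinv] at h
  simp only [smul_apply, smul_eq_mul, mul_assoc] at h
  exact mul_left_cancel₀ pi_ne_zero (mul_left_cancel₀ two_ne_zero h)

theorem average_of_hamiltonian_vector_field_general (hΩ : ∀ v, Ω v v = 0)
    {H ω g : E → ℝ} (hH : ContDiff ℝ 3 H) (hω : ContDiff ℝ 2 ω) (hω0 : ∀ x, ω x ≠ 0)
    (hg : ContDiff ℝ 1 g) {φ ψ : ℝ → E → E} (hφ : IsFlowOf (hamiltonianVectorField Ω H) φ)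
    (hφper : ∀ x, φ (2 * π / ω x) x = x)
    (hψ : IsFlowOf (fun x => (ω x)⁻¹ • hamiltonianVectorField Ω H x) ψ) :
    (∀ x, (1 / (2 * π)) • (∫ t in (0 : ℝ)..(2 * π),
        fderiv ℝ (ψ (-t)) (ψ t x) (hamiltonianVectorField Ω g (ψ t x))) =
      hamiltonianVectorField Ω (fun y => (1 / (2 * π)) * ∫ t in (0 : ℝ)..(2 * π), g (ψ t y)) x) ∧
    ((∀ t x, g (ψ t x) = g x) → ∀ t x,
      fderiv ℝ (ψ (-t)) (ψ t x) (hamiltonianVectorField Ω g (ψ t x)) =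
        hamiltonianVectorField Ω g x) := by
  have hinv : ContDiff ℝ 2 fun x => (ω x)⁻¹ := hω.inv hω0
  have hX : ContDiff ℝ 2 fun x => (ω x)⁻¹ • hamiltonianVectorField Ω H x :=
    hinv.smul (contDiff_hamiltonianVectorField hH (by norm_num))
  have hΩX := fun z => apply_fderiv_smul_hamiltonianVectorField hΩ
    (hinv.differentiable two_ne_zero z) (hH.contDiffAt.of_le (by norm_num))
    (fderiv_inv_mul_fderiv_comm hΩ hH (hω.differentiable two_ne_zero) hω0 hφ hφper z)
  refine ⟨hψ.smul_intervalIntegral_fderiv_neg_hamiltonianVectorField hX hΩX hg _ _ _,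
    fun hinvariant t x => ?_⟩
  rw [hψ.fderiv_neg_hamiltonianVectorField hX hΩX (hg.differentiable one_ne_zero)]
  simp only [hinvariant]

end Symplectic

section Canonical

/-- The canonical symplectic form `∑ dqᵢ ∧ dpᵢ` on `ℝⁿ × ℝⁿ`, as an isomorphism onto the dual. -/
noncomputable def canonicalSymplecticForm (n : ℕ) : ((Fin n → ℝ) × (Fin n → ℝ)) ≃L[ℝ]
    (((Fin n → ℝ) × (Fin n → ℝ)) →L[ℝ] ℝ) :=
  LinearEquiv.toContinuousLinearEquiv
    { toFun := fun a => LinearMap.toContinuousLinearMap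
        (dotProductBilin ℝ ℝ a.1 ∘ₗ .snd ℝ _ _ - dotProductBilin ℝ ℝ a.2 ∘ₗ .fst ℝ _ _)
      invFun := fun f => (fun i => f (0, Pi.single i 1), fun i => -f (Pi.single i 1, 0))
      map_add' := fun a b => by ext <;> simp [add_comm]
      map_smul' := fun c a => by ext <;> simp
      left_inv := fun a => by ext <;> simp
      right_inv := fun f => by apply coe_injective; ext <;> simp }

theorem canonicalSymplecticForm_apply_self {n : ℕ} (v : (Fin n → ℝ) × (Fin n → ℝ)) :
    canonicalSymplecticForm n v v = 0 := by
  simp [canonicalSymplecticForm, dotProduct_comm]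

theorem hamiltonianVectorField_canonicalSymplecticForm {n : ℕ} :
    hamiltonianVectorField (canonicalSymplecticForm n) = hamVF :=
  rfl

end Canonical

/-- The average of a Hamiltonian vector field is the Hamiltonian vector field of the
averaged Hamiltonian, `⟨X_g⟩ = X_{⟨g⟩}`; in particular Hamiltonian vector fields of
S¹-invariant functions are S¹-invariant. -/
theorem average_of_hamiltonian_vector_field
    {n : ℕ} (H : ((Fin n → ℝ) × (Fin n → ℝ)) → ℝ) (hH : ContDiff ℝ (⊤ : ℕ∞) H)
    (ω : ((Fin n → ℝ) × (Fin n → ℝ)) → ℝ) (hω : ContDiff ℝ (⊤ : ℕ∞) ω)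
    (hωpos : ∀ x, 0 < ω x)
    (φ ψ : ℝ → ((Fin n → ℝ) × (Fin n → ℝ)) → ((Fin n → ℝ) × (Fin n → ℝ)))
    (hφ0 : ∀ x, φ 0 x = x) (hφadd : ∀ s t : ℝ, ∀ x, φ (s + t) x = φ s (φ t x))
    (hφflow : ∀ t : ℝ, ∀ x, HasDerivAt (fun τ : ℝ => φ τ x) (hamVF H (φ t x)) t)
    (hφper : ∀ t : ℝ, ∀ x, φ (t + 2 * π / ω x) x = φ t x)
    (hψ0 : ∀ x, ψ 0 x = x) (hψadd : ∀ s t : ℝ, ∀ x, ψ (s + t) x = ψ s (ψ t x))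
    (hψflow : ∀ t : ℝ, ∀ x, HasDerivAt (fun τ : ℝ => ψ τ x)
      ((ω (ψ t x))⁻¹ • hamVF H (ψ t x)) t)
    (hψper : ∀ t : ℝ, ∀ x, ψ (t + 2 * π) x = ψ t x)
    (g : ((Fin n → ℝ) × (Fin n → ℝ)) → ℝ) (hg : ContDiff ℝ (⊤ : ℕ∞) g) :
    (∀ x, (1 / (2 * π)) •
        (∫ t in (0:ℝ)..(2 * π), fderiv ℝ (ψ (-t)) (ψ t x) (hamVF g (ψ t x)))
      = hamVF (fun y => (1 / (2 * π)) * ∫ t in (0:ℝ)..(2 * π), g (ψ t y)) x) ∧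
    ((∀ t : ℝ, ∀ x, g (ψ t x) = g x) →
      ∀ t : ℝ, ∀ x, fderiv ℝ (ψ (-t)) (ψ t x) (hamVF g (ψ t x)) = hamVF g x) := by
  have hφ : IsFlowOf (hamVF H) φ := ⟨hφ0, hφadd, hφflow⟩
  have hψ : IsFlowOf (fun x => (ω x)⁻¹ • hamVF H x) ψ := ⟨hψ0, hψadd, hψflow⟩
  have hperiod : ∀ x, φ (2 * π / ω x) x = x := fun x => by simpa [hφ0] using hφper 0 x
  rw [← hamiltonianVectorField_canonicalSymplecticForm] at hφ hψ ⊢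
  exact average_of_hamiltonian_vector_field_general canonicalSymplecticForm_apply_self
    (contDiff_infty.1 hH 3) (contDiff_infty.1 hω 2) (fun x => (hωpos x).ne')
    (contDiff_infty.1 hg 1) hφ hperiod hψ
end
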